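/- arXiv:2107.03171 — 2 statements merged into one kernel-verified Lean document; each statement's English description precedes it below -/
import Mathlib

section
/- There exists an absolute constant C > 0 such that for every n and every Boolean function f : {0,1}^n → {0,1} whose sensitivity s satisfies s ≥ 16, one has pdeg(OR_s) ≤ C · pdeg(f) · (log₂ log₂ s)². -/
open scoped Classical

noncomputable def evalBool {ι : Type} (a : ι → Bool) (P : MvPolynomial ι ℝ) : ℝ :=
  MvPolynomial.eval (fun i => if a i then (1:ℝ) else 0) P

def HasProbPoly {ι : Type} (f : (ι → Bool) → Bool) (ε : ℝ) (d : ℕ) : Prop :=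
  ∃ (k : ℕ) (w : Fin k → ℝ) (P : Fin k → MvPolynomial ι ℝ),
    (∀ i, 0 ≤ w i) ∧ (∑ i, w i = 1) ∧ (∀ i, (P i).totalDegree ≤ d) ∧
    ∀ a : ι → Bool,
      ∑ i ∈ Finset.univ.filter
          (fun i => evalBool a (P i) ≠ (if f a then (1:ℝ) else 0)), w i ≤ ε

noncomputable def pdeg {ι : Type} (ε : ℝ) (f : (ι → Bool) → Bool) : ℕ :=
  sInf {d | HasProbPoly f ε d}

def TrulyVariate {ι : Type} (f : (ι → Bool) → Bool) : Prop :=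
  ∀ i : ι, ∃ a, f (Function.update a i (!(a i))) ≠ f a

def ORf (n : ℕ) : (Fin n → Bool) → Bool := fun a => decide (∃ i, a i = true)

noncomputable def sensitivity {n : ℕ} (f : (Fin n → Bool) → Bool) : ℕ :=
  Finset.univ.sup (fun a : Fin n → Bool =>
    (Finset.univ.filter (fun i : Fin n => f (Function.update a i (!(a i))) ≠ f a)).card)


/-! ### Finite probability -/

def IsDist {Ω : Type} [Fintype Ω] (w : Ω → ℝ) : Prop := (∀ o, 0 ≤ w o) ∧ ∑ o, w o = 1

noncomputable def prb {Ω : Type} [Fintype Ω] (w : Ω → ℝ) (A : Ω → Prop) : ℝ :=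
  ∑ o, if A o then w o else 0

lemma prb_mono {Ω : Type} [Fintype Ω] {w : Ω → ℝ} (hw : IsDist w) {A B : Ω → Prop}
    (h : ∀ o, A o → B o) : prb w A ≤ prb w B := by
  unfold prb
  refine Finset.sum_le_sum fun o _ => ?_
  have := hw.1 o
  have := h o
  split_ifs <;> tauto

lemma prb_or {Ω : Type} [Fintype Ω] {w : Ω → ℝ} (hw : IsDist w) (A B : Ω → Prop) :
    prb w (fun o => A o ∨ B o) ≤ prb w A + prb w B := by
  unfold prb
  rw [← Finset.sum_add_distrib]
  refine Finset.sum_le_sum fun o _ => ?_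
  have := hw.1 o
  split_ifs <;> first | tauto | linarith

lemma prb_exists {Ω I : Type} [Fintype Ω] [Fintype I] {w : Ω → ℝ} (hw : IsDist w)
    (A : I → Ω → Prop) :
    prb w (fun o => ∃ i, A i o) ≤ ∑ i, prb w (A i) := by
  unfold prb
  rw [Finset.sum_comm]
  refine Finset.sum_le_sum fun o _ => ?_
  have h0 := hw.1 o
  have hn : ∀ i ∈ Finset.univ, 0 ≤ (if A i o then w o else 0) := by
    intro i _; split_ifs <;> simp [h0]
  split_ifs with h
  · obtain ⟨i, hi⟩ := h
    have := Finset.single_le_sum hn (Finset.mem_univ i)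
    simpa [hi] using this
  · exact Finset.sum_nonneg hn

lemma prb_compl {Ω : Type} [Fintype Ω] {w : Ω → ℝ} (hw : IsDist w) (A : Ω → Prop) :
    prb w (fun o => ¬ A o) = 1 - prb w A := by
  rw [eq_sub_iff_add_eq, ← hw.2]
  unfold prb
  rw [← Finset.sum_add_distrib]
  refine Finset.sum_congr rfl fun o _ => ?_
  by_cases h : A o <;> simp [h]

lemma prb_nonneg {Ω : Type} [Fintype Ω] {w : Ω → ℝ} (hw : IsDist w) (A : Ω → Prop) :
    0 ≤ prb w A := by
  refine Finset.sum_nonneg fun o _ => ?_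
  have := hw.1 o
  split_ifs <;> simp [this]

lemma prb_le_one {Ω : Type} [Fintype Ω] {w : Ω → ℝ} (hw : IsDist w) (A : Ω → Prop) :
    prb w A ≤ 1 := by
  have h := prb_compl hw A
  have := prb_nonneg hw (fun o => ¬ A o)
  linarith

lemma isDist_prod {Ω Ω' : Type} [Fintype Ω] [Fintype Ω'] {w : Ω → ℝ} {w' : Ω' → ℝ}
    (hw : IsDist w) (hw' : IsDist w') : IsDist (fun p : Ω × Ω' => w p.1 * w' p.2) := by
  refine ⟨fun p => mul_nonneg (hw.1 _) (hw'.1 _), ?_⟩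
  rw [Fintype.sum_prod_type]
  simp only [← Finset.mul_sum, hw'.2, mul_one, hw.2]

lemma prb_prod_le {Ω Ω' : Type} [Fintype Ω] [Fintype Ω'] {w : Ω → ℝ} {w' : Ω' → ℝ}
    (hw : IsDist w) {A : Ω × Ω' → Prop} {ε : ℝ}
    (h : ∀ o, prb w' (fun o' => A (o, o')) ≤ ε) :
    prb (fun p : Ω × Ω' => w p.1 * w' p.2) A ≤ ε := by
  unfold prb at *
  rw [Fintype.sum_prod_type]
  calc _ = ∑ o, w o * ∑ o', (if A (o, o') then w' o' else 0) := by
        refine Finset.sum_congr rfl fun o _ => ?_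
        rw [Finset.mul_sum]
        refine Finset.sum_congr rfl fun o' _ => ?_
        split_ifs <;> simp
    _ ≤ ∑ o, w o * ε := by
        refine Finset.sum_le_sum fun o _ => mul_le_mul_of_nonneg_left (h o) (hw.1 o)
    _ = ε := by rw [← Finset.sum_mul, hw.2, one_mul]

lemma prb_prod_le' {Ω Ω' : Type} [Fintype Ω] [Fintype Ω'] {w : Ω → ℝ} {w' : Ω' → ℝ}
    (hw' : IsDist w') {A : Ω × Ω' → Prop} {ε : ℝ}
    (h : ∀ o', prb w (fun o => A (o, o')) ≤ ε) :
    prb (fun p : Ω × Ω' => w p.1 * w' p.2) A ≤ ε := by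
  unfold prb at *
  rw [Fintype.sum_prod_type_right]
  calc _ = ∑ o', w' o' * ∑ o, (if A (o, o') then w o else 0) := by
        refine Finset.sum_congr rfl fun o _ => ?_
        rw [Finset.mul_sum]
        refine Finset.sum_congr rfl fun o' _ => ?_
        split_ifs <;> simp [mul_comm]
    _ ≤ ∑ o', w' o' * ε := by
        refine Finset.sum_le_sum fun o _ => mul_le_mul_of_nonneg_left (h o) (hw'.1 o)
    _ = ε := by rw [← Finset.sum_mul, hw'.2, one_mul]

lemma sum_pi_prod {I Ω : Type} [Fintype I] [DecidableEq I] [Fintype Ω] (w : I → Ω → ℝ) :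
    ∑ o : I → Ω, ∏ i, w i (o i) = ∏ i, ∑ o, w i o := by
  rw [Finset.prod_univ_sum]
  simp [Fintype.piFinset_univ]

lemma isDist_pi {I Ω : Type} [Fintype I] [DecidableEq I] [Fintype Ω] {w : I → Ω → ℝ}
    (hw : ∀ i, IsDist (w i)) : IsDist (fun o : I → Ω => ∏ i, w i (o i)) := by
  refine ⟨fun o => Finset.prod_nonneg fun i _ => (hw i).1 _, ?_⟩
  rw [sum_pi_prod]
  exact Finset.prod_eq_one fun i _ => (hw i).2

lemma prb_pi {I Ω : Type} [Fintype I] [DecidableEq I] [Fintype Ω] (w : I → Ω → ℝ) (A : I → Ω → Prop) :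
    prb (fun o : I → Ω => ∏ i, w i (o i)) (fun o => ∀ i, A i (o i)) = ∏ i, prb (w i) (A i) := by
  unfold prb
  rw [← sum_pi_prod]
  refine Finset.sum_congr rfl fun o _ => ?_
  split_ifs with h
  · exact Finset.prod_congr rfl fun i _ => by simp [h i]
  · push Not at h
    obtain ⟨i, hi⟩ := h
    exact (Finset.prod_eq_zero (Finset.mem_univ i) (by simp [hi])).symm

/-! ### Isolation -/

def Iso {α : Type} (T : α → Bool) (W : Finset α) : Prop :=
  ∃ i ∈ W, ∀ j ∈ W, (T j = true ↔ j = i)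

noncomputable def coin (p : ℝ) : Bool → ℝ := fun b => if b then p else 1 - p

lemma coin_dist {p : ℝ} (h0 : 0 ≤ p) (h1 : p ≤ 1) : IsDist (coin p) := by
  refine ⟨fun b => ?_, ?_⟩
  · unfold coin; split_ifs <;> linarith
  · simp [coin]

lemma iso_prob {α : Type} [Fintype α] [DecidableEq α] (W : Finset α) (p : ℝ)
    (h0 : 1 / 4 ≤ W.card * p) (h1 : W.card * p ≤ 1 / 2) (hp : 0 ≤ p) (hp1 : p ≤ 1) :
    prb (fun T : α → Bool => ∏ i, coin p (T i)) (fun T => ¬ Iso T W) ≤ 13 / 16 := by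
  have hd : IsDist (fun T : α → Bool => ∏ i, coin p (T i)) :=
    isDist_pi (w := fun _ => coin p) fun _ => coin_dist hp hp1
  rw [prb_compl hd]
  have key : ∀ i ∈ W, prb (fun T : α → Bool => ∏ i, coin p (T i))
      (fun T => ∀ j, j ∈ W → (T j = true ↔ j = i)) = p * (1 - p) ^ (W.card - 1) := by
    intro i hi
    rw [prb_pi (fun _ => coin p) (fun j b => j ∈ W → (b = true ↔ j = i))]
    have : ∀ j, prb (coin p) (fun b => j ∈ W → (b = true ↔ j = i)) =
        (if j = i then p else 1) * (if j ∈ W.erase i then 1 - p else 1) := by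
      intro j
      by_cases hj : j = i
      · subst hj
        simp [prb, hi, coin]
      · by_cases hjW : j ∈ W <;> simp [prb, hj, hjW, coin]
    simp_rw [this]
    rw [Finset.prod_mul_distrib]
    simp [Finset.prod_ite]
    left
    congr 1
    rw [← Finset.card_erase_of_mem hi]
    congr 1
    ext j; simp
  have hsum : ∑ i ∈ W, prb (fun T : α → Bool => ∏ i, coin p (T i))
      (fun T => ∀ j, j ∈ W → (T j = true ↔ j = i)) ≤
      prb (fun T : α → Bool => ∏ i, coin p (T i)) (fun T => Iso T W) := by
    unfold prb
    rw [Finset.sum_comm]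
    refine Finset.sum_le_sum fun T _ => ?_
    have hT := hd.1 T
    by_cases hI : Iso T W
    · rw [if_pos hI]
      obtain ⟨i, hi, hT'⟩ := hI
      rw [Finset.sum_eq_single i]
      · rw [if_pos hT']
      · intro i' hi' hne
        rw [if_neg]
        intro h
        exact hne ((hT' i' hi').1 ((h i' hi').2 rfl))
      · intro h; exact absurd hi h
    · rw [if_neg hI]
      refine le_of_eq (Finset.sum_eq_zero fun i hi => ?_)
      rw [if_neg]
      intro h
      exact hI ⟨i, hi, h⟩
  rw [Finset.sum_congr rfl key, Finset.sum_const, nsmul_eq_mul] at hsum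
  have hb : 1 - W.card * p ≤ (1 - p) ^ (W.card - 1) := by
    have h := one_add_mul_le_pow (a := -p) (by linarith) (W.card - 1)
    have hc : ((W.card - 1 : ℕ) : ℝ) ≤ W.card := by exact_mod_cast Nat.sub_le _ _
    have := mul_le_mul_of_nonneg_right hc hp
    have e : (1 + -p) = 1 - p := by ring
    rw [e] at h
    linarith
  have h2 : (W.card * p) * (1 - W.card * p) ≤ (W.card * p) * (1 - p) ^ (W.card - 1) :=
    mul_le_mul_of_nonneg_left hb (by linarith)
  nlinarith

abbrev Idx (N : ℕ) : Type := Fin 11 × Fin (Nat.log 2 N + 1)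

lemma isolation (α : Type) [Fintype α] [DecidableEq α] :
    ∃ w : (Idx (Fintype.card α) → α → Bool) → ℝ, IsDist w ∧
      ∀ W : Finset α, W.Nonempty → prb w (fun T => ∀ q, ¬ Iso (T q) W) ≤ 1 / 9 := by
  have hp0 : ∀ j : ℕ, (0:ℝ) ≤ (1/2) ^ (j + 2) := fun j => by positivity
  have hp1 : ∀ j : ℕ, ((1:ℝ)/2) ^ (j + 2) ≤ 1 := fun j => pow_le_one₀ (by norm_num) (by norm_num)
  have hdq : ∀ q : Idx (Fintype.card α),
      IsDist (fun T : α → Bool => ∏ i, coin ((1/2) ^ ((q.2 : ℕ) + 2)) (T i)) := fun q =>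
    isDist_pi (w := fun _ => coin ((1/2) ^ ((q.2 : ℕ) + 2))) fun _ => coin_dist (hp0 _) (hp1 _)
  refine ⟨fun T => ∏ q : Idx (Fintype.card α),
    (fun T : α → Bool => ∏ i, coin ((1/2) ^ ((q.2 : ℕ) + 2)) (T i)) (T q), isDist_pi hdq, ?_⟩
  intro W hW
  rw [prb_pi (fun q : Idx (Fintype.card α) =>
    (fun T : α → Bool => ∏ i, coin ((1/2) ^ ((q.2 : ℕ) + 2)) (T i))) (fun q T => ¬ Iso T W)]
  have hc0 : W.card ≠ 0 := by simpa using hW.ne_empty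
  have hlt : Nat.log 2 W.card < Nat.log 2 (Fintype.card α) + 1 :=
    Nat.lt_succ_of_le (Nat.log_mono_right (Finset.card_le_univ W))
  set j0 : Fin (Nat.log 2 (Fintype.card α) + 1) := ⟨Nat.log 2 W.card, hlt⟩ with hj0
  calc _ ≤ ∏ q : Idx (Fintype.card α), (if q.2 = j0 then (13/16 : ℝ) else 1) := by
        refine Finset.prod_le_prod (fun q _ => prb_nonneg (hdq q) _) fun q _ => ?_
        split_ifs with h
        · have e1 : ((2:ℝ) ^ (Nat.log 2 W.card)) ≤ W.card := by
            exact_mod_cast Nat.pow_log_le_self 2 hc0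
          have e2 : (W.card : ℝ) ≤ 2 ^ (Nat.log 2 W.card + 1) := by
            exact_mod_cast (Nat.lt_pow_succ_log_self (by norm_num) _).le
          have hqv : (q.2 : ℕ) = Nat.log 2 W.card := by rw [h]
          have hpos : (0:ℝ) < (1/2) ^ (Nat.log 2 W.card + 2) := by positivity
          have hinv : (2:ℝ) ^ (Nat.log 2 W.card) * (1/2) ^ (Nat.log 2 W.card) = 1 := by
            rw [← mul_pow]; norm_num
          refine iso_prob W _ ?_ ?_ (hp0 _) (hp1 _)
          · rw [hqv]
            have := mul_le_mul_of_nonneg_right e1 hpos.le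
            rw [pow_add (1/2 : ℝ)] at *
            nlinarith
          · rw [hqv]
            have := mul_le_mul_of_nonneg_right e2 hpos.le
            rw [pow_add (1/2 : ℝ), pow_add (2:ℝ)] at *
            nlinarith
        · exact prb_le_one (hdq q) _
    _ = (13/16 : ℝ) ^ 11 := by
        rw [Fintype.prod_prod_type]
        simp only [Finset.prod_ite_eq', Finset.mem_univ, if_true, Finset.prod_const,
          Finset.card_univ, Fintype.card_fin]
    _ ≤ 1 / 9 := by norm_num

/-! ### Probabilistic polynomials over general finite sample spaces -/

def bv (b : Bool) : ℝ := if b then 1 else 0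

def PP {ι : Type} (f : (ι → Bool) → Bool) (ε : ℝ) (d : ℕ) : Prop :=
  ∃ (Ω : Type) (_ : Fintype Ω) (w : Ω → ℝ) (P : Ω → MvPolynomial ι ℝ),
    IsDist w ∧ (∀ i, (P i).totalDegree ≤ d) ∧
    ∀ a : ι → Bool, prb w (fun i => evalBool a (P i) ≠ bv (f a)) ≤ ε

lemma HasProbPoly.toPP {ι : Type} {f : (ι → Bool) → Bool} {ε : ℝ} {d : ℕ}
    (h : HasProbPoly f ε d) : PP f ε d := by
  obtain ⟨k, w, P, h0, h1, hd, he⟩ := h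
  refine ⟨Fin k, inferInstance, w, P, ⟨h0, h1⟩, hd, fun a => ?_⟩
  have := he a
  rw [Finset.sum_filter] at this
  unfold prb bv
  convert this

lemma PP.toHas {ι : Type} {f : (ι → Bool) → Bool} {ε : ℝ} {d : ℕ}
    (h : PP f ε d) : HasProbPoly f ε d := by
  obtain ⟨Ω, _, w, P, hw, hd, he⟩ := h
  let e := (Fintype.equivFin Ω).symm
  refine ⟨Fintype.card Ω, fun i => w (e i), fun i => P (e i), fun i => hw.1 _, ?_,
    fun i => hd _, fun a => ?_⟩
  · rw [← hw.2]; exact e.sum_comp w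
  · have := he a
    rw [Finset.sum_filter]
    unfold prb bv at this
    rw [← e.sum_comp] at this
    convert this

lemma exists_HasProbPoly {n : ℕ} (f : (Fin n → Bool) → Bool) :
    ∃ d, HasProbPoly f (1/3) d := by
  let P : MvPolynomial (Fin n) ℝ := ∑ b : Fin n → Bool, MvPolynomial.C (bv (f b)) *
    ∏ i, (if b i then MvPolynomial.X i else 1 - MvPolynomial.X i)
  have hP : ∀ a, evalBool a P = bv (f a) := by
    intro a
    simp only [evalBool, P, map_sum, map_mul, map_prod, MvPolynomial.eval_C]
    rw [Finset.sum_eq_single a]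
    · rw [Finset.prod_eq_one, mul_one]
      intro i _
      by_cases h : a i <;> simp [h]
    · intro b _ hb
      obtain ⟨i, hi⟩ := Function.ne_iff.1 hb
      rw [Finset.prod_eq_zero (Finset.mem_univ i), mul_zero]
      cases h : a i <;> cases h' : b i <;> simp_all
    · simp
  refine ⟨P.totalDegree, PP.toHas ⟨Unit, inferInstance, fun _ => 1, fun _ => P,
    ⟨by simp, by simp⟩, fun _ => le_rfl, fun a => ?_⟩⟩
  simp [prb, hP]

/-! ### Amplification -/

noncomputable def maj {R : Type} [CommRing R] (k : ℕ) (p : Fin (2 * k) → R) : R :=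
  ∑ S ∈ Finset.univ.powerset.filter (fun S : Finset (Fin (2 * k)) => k ≤ S.card),
    (∏ i ∈ S, p i) * ∏ i ∈ Finset.univ \ S, (1 - p i)

lemma maj_zero (k : ℕ) (p : Fin (2 * k) → ℝ)
    (h : k < (Finset.univ.filter (fun i => p i = 0)).card) : maj k p = 0 := by
  refine Finset.sum_eq_zero fun S hS => ?_
  have hc : k ≤ S.card := (Finset.mem_filter.1 hS).2
  have : ∃ i ∈ S, p i = 0 := by
    by_contra hcon
    push Not at hcon
    have hdis : Disjoint S (Finset.univ.filter (fun i => p i = 0)) := by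
      rw [Finset.disjoint_left]
      intro i hi hi'
      exact hcon i hi (Finset.mem_filter.1 hi').2
    have := Finset.card_union_of_disjoint hdis
    have h2 := Finset.card_le_univ (S ∪ Finset.univ.filter (fun i => p i = 0))
    rw [Fintype.card_fin] at h2
    omega
  obtain ⟨i, hi, h0⟩ := this
  rw [Finset.prod_eq_zero hi h0, zero_mul]

lemma maj_one (k : ℕ) (p : Fin (2 * k) → ℝ)
    (h : k < (Finset.univ.filter (fun i => p i = 1)).card) : maj k p = 1 := by
  have htot : ∑ S ∈ (Finset.univ : Finset (Fin (2*k))).powerset,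
      (∏ i ∈ S, p i) * ∏ i ∈ Finset.univ \ S, (1 - p i) = 1 := by
    rw [← Finset.prod_add]
    simp
  rw [← htot, maj, ← Finset.sum_filter_add_sum_filter_not Finset.univ.powerset
    (fun S : Finset (Fin (2 * k)) => k ≤ S.card)]
  symm
  rw [add_eq_left]
  refine Finset.sum_eq_zero fun S hS => ?_
  have hc : ¬ k ≤ S.card := (Finset.mem_filter.1 hS).2
  have : ∃ i ∈ Finset.univ \ S, p i = 1 := by
    by_contra hcon
    push Not at hcon
    have hsub : Finset.univ.filter (fun i => p i = 1) ⊆ S := by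
      intro i hi
      by_contra hiS
      exact hcon i (by simp [hiS]) (Finset.mem_filter.1 hi).2
    have := Finset.card_le_card hsub
    omega
  obtain ⟨i, hi, h0⟩ := this
  rw [Finset.prod_eq_zero (i := i) hi (by rw [h0, sub_self]), mul_zero]

lemma totalDegree_one_sub {ι : Type} (P : MvPolynomial ι ℝ) {d : ℕ} (h : P.totalDegree ≤ d) :
    (1 - P).totalDegree ≤ d := by
  refine (MvPolynomial.totalDegree_sub _ _).trans ?_
  simp [h]

lemma maj_degree {ι : Type} (k d : ℕ) (P : Fin (2 * k) → MvPolynomial ι ℝ)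
    (h : ∀ i, (P i).totalDegree ≤ d) : (maj k P).totalDegree ≤ 2 * k * d := by
  refine MvPolynomial.totalDegree_finsetSum_le fun S _ => ?_
  refine (MvPolynomial.totalDegree_mul _ _).trans ?_
  have h1 := (MvPolynomial.totalDegree_finsetProd S P).trans
    (Finset.sum_le_card_nsmul S _ d fun i _ => h i)
  have h2 := (MvPolynomial.totalDegree_finsetProd (Finset.univ \ S) (fun i => 1 - P i)).trans
    (Finset.sum_le_card_nsmul _ _ d fun i _ => totalDegree_one_sub _ (h i))
  have h3 := Finset.card_sdiff_add_card_eq_card (Finset.subset_univ S)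
  rw [Finset.card_univ, Fintype.card_fin] at h3
  have h4 : 2 * k * d = (Finset.univ \ S).card * d + S.card * d := by
    rw [← add_mul]; exact congrArg (· * d) h3.symm
  simp only [smul_eq_mul] at h1 h2
  exact h4 ▸ (add_comm _ _).trans_le (add_le_add h2 h1)

lemma maj_eval {ι : Type} (k : ℕ) (P : Fin (2 * k) → MvPolynomial ι ℝ) (a : ι → Bool) :
    evalBool a (maj k P) = maj k (fun i => evalBool a (P i)) := by
  simp [evalBool, maj, map_sum, map_mul, map_prod]

lemma amplify {ι : Type} {f : (ι → Bool) → Bool} {d : ℕ} (h : PP f (1/3) d) (k : ℕ) :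
    PP f ((8/9) ^ k) (2 * k * d) := by
  obtain ⟨Ω, _, w, P, hw, hd, he⟩ := h
  refine ⟨Fin (2 * k) → Ω, inferInstance, fun o => ∏ i, w (o i), fun o => maj k (fun i => P (o i)),
    isDist_pi (w := fun _ => w) fun _ => hw, fun o => maj_degree k d _ fun i => hd _, fun a => ?_⟩
  have hD : IsDist (fun o : Fin (2 * k) → Ω => ∏ i, w (o i)) :=
    isDist_pi (w := fun _ => w) fun _ => hw
  set Bad : Ω → Prop := fun o => evalBool a (P o) ≠ bv (f a) with hBad
  have hE : ∑ o, w o * (if Bad o then 2 else 1) ≤ 4/3 := by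
    have : ∑ o, w o * (if Bad o then 2 else 1) = 1 + prb w Bad := by
      have e1 : 1 + prb w Bad = ∑ o, w o + prb w Bad := by rw [hw.2]
      rw [e1, prb, ← Finset.sum_add_distrib]
      refine Finset.sum_congr rfl fun o _ => ?_
      split_ifs <;> ring
    rw [this]; linarith [he a]
  have hE0 : 0 ≤ ∑ o, w o * (if Bad o then (2:ℝ) else 1) :=
    Finset.sum_nonneg fun o _ => mul_nonneg (hw.1 o) (by split_ifs <;> norm_num)
  have hprod : ∑ o : Fin (2*k) → Ω, ∏ i, (w (o i) * (if Bad (o i) then (2:ℝ) else 1)) ≤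
      (4/3) ^ (2*k) := by
    rw [sum_pi_prod (fun _ o => w o * (if Bad o then (2:ℝ) else 1))]
    rw [Finset.prod_const, Finset.card_univ, Fintype.card_fin]
    exact pow_le_pow_left₀ hE0 hE _
  have hmark : 2 ^ k * prb (fun o : Fin (2 * k) → Ω => ∏ i, w (o i))
      (fun o => evalBool a (maj k (fun i => P (o i))) ≠ bv (f a)) ≤ (4/3) ^ (2*k) := by
    refine le_trans ?_ hprod
    rw [prb, Finset.mul_sum]
    refine Finset.sum_le_sum fun o _ => ?_
    rw [Finset.prod_mul_distrib]
    have hw0 := hD.1 o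
    have hpow : ∏ i, (if Bad (o i) then (2:ℝ) else 1) =
        2 ^ (Finset.univ.filter (fun i => Bad (o i))).card := by
      rw [Finset.prod_ite]; simp
    rw [hpow]
    split_ifs with hb
    · rw [mul_comm]
      refine mul_le_mul_of_nonneg_left ?_ hw0
      refine pow_le_pow_right₀ (by norm_num) ?_
      by_contra hlt
      push Not at hlt
      apply hb
      have hcard := Finset.card_filter_add_card_filter_not (s := Finset.univ)
        (fun i => Bad (o i))
      rw [Finset.card_univ, Fintype.card_fin] at hcard
      have hgood : k < (Finset.univ.filter (fun i => evalBool a (P (o i)) = bv (f a))).card := by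
        have : (Finset.univ.filter (fun i => evalBool a (P (o i)) = bv (f a))) =
            Finset.univ.filter (fun i => ¬ Bad (o i)) := by
          ext i; simp [hBad]
        rw [this]; omega
      rw [maj_eval]
      cases hf : f a
      · rw [hf] at hgood
        simp only [bv] at hgood ⊢
        simpa using maj_zero k _ (by simpa using hgood)
      · rw [hf] at hgood
        simp only [bv] at hgood ⊢
        simpa using maj_one k _ (by simpa using hgood)
    · rw [mul_zero]
      positivity
  have h2 : (0:ℝ) < 2 ^ k := by positivity
  have h3 : ((4:ℝ)/3) ^ (2*k) = 2 ^ k * (8/9) ^ k := by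
    rw [pow_mul, ← mul_pow]; norm_num
  rw [h3] at hmark
  exact le_of_mul_le_mul_left hmark h2

/-! ### Substitution -/

lemma aeval_degree {ι κ : Type} (g : ι → MvPolynomial κ ℝ) (hg : ∀ i, (g i).totalDegree ≤ 1)
    (p : MvPolynomial ι ℝ) : (MvPolynomial.aeval g p).totalDegree ≤ p.totalDegree := by
  rw [MvPolynomial.aeval_def, MvPolynomial.eval₂_eq]
  refine MvPolynomial.totalDegree_finsetSum_le fun v hv => ?_
  refine (MvPolynomial.totalDegree_mul _ _).trans ?_
  rw [MvPolynomial.algebraMap_eq, MvPolynomial.totalDegree_C, zero_add]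
  refine (MvPolynomial.totalDegree_finsetProd _ _).trans ?_
  refine le_trans ?_ (MvPolynomial.le_totalDegree hv)
  rw [Finsupp.sum]
  refine Finset.sum_le_sum fun i _ => ?_
  refine (MvPolynomial.totalDegree_pow _ _).trans ?_
  simpa using Nat.mul_le_mul_left (v i) (hg i)

lemma aeval_evalBool {ι κ : Type} (g : ι → MvPolynomial κ ℝ) (x : κ → Bool) (y : ι → Bool)
    (h : ∀ i, evalBool x (g i) = bv (y i)) (p : MvPolynomial ι ℝ) :
    evalBool x (MvPolynomial.aeval g p) = evalBool y p := by
  unfold evalBool at *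
  induction p using MvPolynomial.induction_on with
  | C r => simp
  | add p q hp hq => rw [map_add, map_add, hp, hq, map_add]
  | mul_X p i hp =>
    rw [map_mul, map_mul, hp, map_mul, MvPolynomial.aeval_X, h, MvPolynomial.eval_X]
    rfl

noncomputable def sigP {n s : ℕ} (a : Fin n → Bool) (e : Fin s → Fin n) (T : Fin s → Bool)
    (i : Fin n) : MvPolynomial (Fin s) ℝ :=
  if h : ∃ j, e j = i ∧ T j = true then
    (if a i then 1 - MvPolynomial.X h.choose else MvPolynomial.X h.choose)
  else MvPolynomial.C (bv (a i))

noncomputable def sigB {n s : ℕ} (a : Fin n → Bool) (e : Fin s → Fin n) (T : Fin s → Bool)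
    (x : Fin s → Bool) (i : Fin n) : Bool :=
  if ∃ j, e j = i ∧ T j = true ∧ x j = true then !(a i) else a i

lemma sigP_degree {n s : ℕ} (a : Fin n → Bool) (e : Fin s → Fin n) (T : Fin s → Bool)
    (i : Fin n) : (sigP a e T i).totalDegree ≤ 1 := by
  unfold sigP
  split_ifs
  · exact totalDegree_one_sub _ (by simp)
  · simp
  · simp

lemma sigP_eval {n s : ℕ} (a : Fin n → Bool) (e : Fin s → Fin n) (he : Function.Injective e)
    (T : Fin s → Bool) (x : Fin s → Bool) (i : Fin n) :
    evalBool x (sigP a e T i) = bv (sigB a e T x i) := by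
  unfold sigP sigB
  by_cases h : ∃ j, e j = i ∧ T j = true
  · rw [dif_pos h]
    have hc := h.choose_spec
    have hiff : (∃ j, e j = i ∧ T j = true ∧ x j = true) ↔ x h.choose = true := by
      constructor
      · rintro ⟨j, hj, -, hx⟩
        have : j = h.choose := he (hj.trans hc.1.symm)
        rwa [← this]
      · intro hx
        exact ⟨_, hc.1, hc.2, hx⟩
    cases ha : a i <;> cases hx : x h.choose <;> simp [hiff, hx, evalBool, bv]
  · rw [dif_neg h, if_neg]
    · simp [evalBool]
    · rintro ⟨j, h1, h2, -⟩
      exact h ⟨j, h1, h2⟩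

lemma sigB_zero {n s : ℕ} (a : Fin n → Bool) (e : Fin s → Fin n) (T : Fin s → Bool)
    (x : Fin s → Bool) (hx : ∀ j, x j = false) : sigB a e T x = a := by
  funext i
  simp [sigB, hx]

lemma sigB_iso {n s : ℕ} (a : Fin n → Bool) (e : Fin s → Fin n)
    (T : Fin s → Bool) (x : Fin s → Bool)
    (h : Iso T (Finset.univ.filter (fun j => x j = true))) :
    ∃ j, sigB a e T x = Function.update a (e j) (!(a (e j))) := by
  obtain ⟨j, hj, h⟩ := h
  refine ⟨j, ?_⟩
  simp only [Finset.mem_filter, Finset.mem_univ, true_and] at hj h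
  funext i
  unfold sigB
  by_cases hi : i = e j
  · subst hi
    rw [if_pos ⟨j, rfl, (h j hj).2 rfl, hj⟩, Function.update_self]
  · rw [if_neg, Function.update_of_ne hi]
    rintro ⟨j', h1, h2, h3⟩
    have := (h j' h3).1 h2
    subst this
    exact hi h1.symm

/-! ### Main construction -/

noncomputable def flipP {κ : Type} (b : Bool) (P : MvPolynomial κ ℝ) : MvPolynomial κ ℝ :=
  if b then 1 - P else P

lemma flipP_degree {κ : Type} (b : Bool) (P : MvPolynomial κ ℝ) {d : ℕ}
    (h : P.totalDegree ≤ d) : (flipP b P).totalDegree ≤ d := by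
  unfold flipP
  split_ifs
  · exact totalDegree_one_sub _ h
  · exact h

lemma flipP_eval {κ : Type} (b c : Bool) (P : MvPolynomial κ ℝ) (x : κ → Bool)
    (h : evalBool x P = bv c) : evalBool x (flipP b P) = if c ≠ b then 1 else 0 := by
  unfold flipP evalBool at *
  cases b <;> cases c <;> simp [h, bv]

noncomputable def orP {κ I I' : Type} [Fintype I] [Fintype I'] (B : I → MvPolynomial κ ℝ)
    (T : I' → I → Bool) : MvPolynomial κ ℝ :=
  1 - ∏ q, (1 - ∑ i, if T q i then B i else 0)

lemma orP_degree {κ I I' : Type} [Fintype I] [Fintype I'] (B : I → MvPolynomial κ ℝ)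
    (T : I' → I → Bool) {d : ℕ} (h : ∀ i, (B i).totalDegree ≤ d) :
    (orP B T).totalDegree ≤ Fintype.card I' * d := by
  refine totalDegree_one_sub _ ?_
  refine (MvPolynomial.totalDegree_finsetProd _ _).trans ?_
  refine (Finset.sum_le_card_nsmul _ _ d fun q _ => ?_).trans_eq (by simp)
  refine totalDegree_one_sub _ ?_
  refine MvPolynomial.totalDegree_finsetSum_le fun i _ => ?_
  split_ifs
  · exact h i
  · simp

lemma orP_zero {κ I I' : Type} [Fintype I] [Fintype I'] (B : I → MvPolynomial κ ℝ)
    (T : I' → I → Bool) (x : κ → Bool) (h : ∀ i, evalBool x (B i) = 0) :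
    evalBool x (orP B T) = 0 := by
  unfold orP evalBool at *
  simp only [map_sub, map_one, map_prod, map_sum]
  rw [Finset.prod_eq_one, sub_self]
  intro q _
  rw [Finset.sum_eq_zero, sub_zero]
  intro i _
  split_ifs
  · exact h i
  · simp

lemma orP_one {κ I I' : Type} [Fintype I] [DecidableEq I] [Fintype I'] (B : I → MvPolynomial κ ℝ)
    (T : I' → I → Bool) (x : κ → Bool) (W : Finset I)
    (h : ∀ i, evalBool x (B i) = if i ∈ W then 1 else 0) (q : I') (hq : Iso (T q) W) :
    evalBool x (orP B T) = 1 := by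
  unfold orP evalBool at *
  simp only [map_sub, map_one, map_prod, map_sum]
  rw [Finset.prod_eq_zero (Finset.mem_univ q), sub_zero]
  obtain ⟨i, hi, hT⟩ := hq
  rw [Finset.sum_eq_single i]
  · rw [if_pos ((hT i hi).2 rfl), h, if_pos hi, sub_self]
  · intro j _ hj
    split_ifs with hTj
    · rw [h, if_neg]
      intro hjW
      exact hj ((hT j hjW).1 hTj)
    · simp
  · simp

lemma main_aux {n s d : ℕ} (f : (Fin n → Bool) → Bool) (a : Fin n → Bool)
    (e : Fin s → Fin n) (he : Function.Injective e)
    (hs : ∀ j, f (Function.update a (e j) (!(a (e j)))) ≠ f a)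
    {I J : Type} [Fintype I] [DecidableEq I] [Fintype J] [DecidableEq J]
    {δ : ℝ} (hδ : Fintype.card I * δ ≤ 1 / 9) (hf : PP f δ d)
    (w₁ : (I → Fin s → Bool) → ℝ) (hw₁ : IsDist w₁)
    (hI₁ : ∀ W : Finset (Fin s), W.Nonempty → prb w₁ (fun T => ∀ q, ¬ Iso (T q) W) ≤ 1 / 9)
    (w₂ : (J → I → Bool) → ℝ) (hw₂ : IsDist w₂)
    (hI₂ : ∀ W : Finset I, W.Nonempty → prb w₂ (fun T => ∀ q, ¬ Iso (T q) W) ≤ 1 / 9) :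
    PP (ORf s) (1/3) (Fintype.card J * d) := by
  obtain ⟨Ω, _, w, P, hw, hd, hP⟩ := hf
  let B : (I → Fin s → Bool) → Ω → I → MvPolynomial (Fin s) ℝ := fun T o i =>
    flipP (f a) (MvPolynomial.aeval (sigP a e (T i)) (P o))
  have hw12 := isDist_prod hw₁ hw₂
  have hD := isDist_prod hw12 hw
  refine ⟨_, inferInstance, _, fun o => orP (B o.1.1 o.2) o.1.2, hD, ?_, ?_⟩
  · intro o
    refine orP_degree _ _ fun i => flipP_degree _ _ ?_
    exact (aeval_degree _ (sigP_degree _ _ _) _).trans (hd _)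
  · intro x
    let V : (I → Fin s → Bool) → Finset (I) := fun T =>
      Finset.univ.filter (fun i => f (sigB a e (T i) x) ≠ f a)
    let X : Finset (Fin s) := Finset.univ.filter (fun j => x j = true)
    have hgood : ∀ T o, (∀ i, evalBool (sigB a e (T i) x) (P o) = bv (f (sigB a e (T i) x))) →
        ∀ i, evalBool x (B T o i) = if i ∈ V T then 1 else 0 := by
      intro T o h i
      rw [flipP_eval (f a) (f (sigB a e (T i) x))]
      · simp [V]
      · rw [aeval_evalBool _ x _ (sigP_eval a e he (T i) x), h]
    have hbad3 : prb (fun p : ((I → Fin s → Bool) × (J → I → Bool)) × Ω =>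
        (w₁ p.1.1 * w₂ p.1.2) * w p.2) (fun p => ∃ i,
          evalBool (sigB a e (p.1.1 i) x) (P p.2) ≠ bv (f (sigB a e (p.1.1 i) x))) ≤ 1/9 := by
      refine prb_prod_le (w := fun p : (I → Fin s → Bool) × (J → I → Bool) => w₁ p.1 * w₂ p.2) hw12 fun T => ?_
      refine (prb_exists hw _).trans ?_
      refine (Finset.sum_le_card_nsmul _ _ δ fun i _ => hP (sigB a e (T.1 i) x)).trans ?_
      rw [nsmul_eq_mul, Finset.card_univ]
      exact hδ
    by_cases hx : ∀ j, x j = false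
    · have h0 : ORf s x = false := by simp [ORf, hx]
      rw [h0]
      refine le_trans (prb_mono hD fun o ho => ?_) (hbad3.trans (by norm_num))
      by_contra hcon
      push Not at hcon
      apply ho
      have h := hgood _ _ hcon
      have hV : V o.1.1 = ∅ := by
        simp [V, sigB_zero a e _ x hx]
      rw [orP_zero]
      · simp [bv]
      · intro i
        rw [h, hV]; simp
    · have h1 : ORf s x = true := by
        simp only [ORf, decide_eq_true_eq]
        by_contra hcon
        push Not at hcon
        exact hx fun j => by simpa using hcon j
      rw [h1]
      have hX : X.Nonempty := by
        push Not at hx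
        obtain ⟨j, hj⟩ := hx
        exact ⟨j, by simpa [X] using hj⟩
      have hbad1 : prb (fun p : ((I → Fin s → Bool) × (J → I → Bool)) × Ω =>
        (w₁ p.1.1 * w₂ p.1.2) * w p.2) (fun p => ∀ q, ¬ Iso (p.1.1 q) X) ≤ 1/9 := by
        refine prb_prod_le' (w := fun p : (I → Fin s → Bool) × (J → I → Bool) => w₁ p.1 * w₂ p.2) hw fun o => ?_
        exact prb_prod_le' hw₂ fun T₂ => hI₁ X hX
      have hbad2 : prb (fun p : ((I → Fin s → Bool) × (J → I → Bool)) × Ω =>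
        (w₁ p.1.1 * w₂ p.1.2) * w p.2) (fun p => (V p.1.1).Nonempty ∧
          ∀ q, ¬ Iso (p.1.2 q) (V p.1.1)) ≤ 1/9 := by
        refine prb_prod_le' (w := fun p : (I → Fin s → Bool) × (J → I → Bool) => w₁ p.1 * w₂ p.2) hw fun o => ?_
        refine prb_prod_le hw₁ fun T => ?_
        by_cases hV : (V T).Nonempty
        · exact (prb_mono hw₂ fun T₂ h => h.2).trans (hI₂ _ hV)
        · simp [prb, hV]
      refine le_trans (prb_mono hD (B := fun p => ((∀ q, ¬ Iso (p.1.1 q) X) ∨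
        ((V p.1.1).Nonempty ∧ ∀ q, ¬ Iso (p.1.2 q) (V p.1.1))) ∨ ∃ i,
          evalBool (sigB a e (p.1.1 i) x) (P p.2) ≠ bv (f (sigB a e (p.1.1 i) x)))
        fun o ho => ?_) ?_
      · by_contra hcon
        push Not at hcon
        obtain ⟨⟨⟨q, hq⟩, h2⟩, h3⟩ := hcon
        have h := hgood _ _ h3
        have hV : (V o.1.1).Nonempty := by
          refine ⟨q, ?_⟩
          obtain ⟨j, hj⟩ := sigB_iso a e (o.1.1 q) x hq
          simp only [V, Finset.mem_filter, Finset.mem_univ, true_and]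
          rw [hj]
          exact hs j
        obtain ⟨q', hq'⟩ := h2 hV
        apply ho
        rw [orP_one _ _ x (V o.1.1) h q' hq']
        simp [bv]
      · have e1 := prb_or hD (fun p => (∀ q, ¬ Iso (p.1.1 q) X) ∨
          ((V p.1.1).Nonempty ∧ ∀ q, ¬ Iso (p.1.2 q) (V p.1.1))) (fun p => ∃ i,
          evalBool (sigB a e (p.1.1 i) x) (P p.2) ≠ bv (f (sigB a e (p.1.1 i) x)))
        have e2 := prb_or hD (fun p => (∀ q, ¬ Iso (p.1.1 q) X)) (fun p =>
          ((V p.1.1).Nonempty ∧ ∀ q, ¬ Iso (p.1.2 q) (V p.1.1)))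
        linarith

lemma main_pp {n s d : ℕ} (f : (Fin n → Bool) → Bool) (a : Fin n → Bool)
    (e : Fin s → Fin n) (he : Function.Injective e)
    (hs : ∀ j, f (Function.update a (e j) (!(a (e j)))) ≠ f a)
    {N₁ : ℕ} (hN₁ : N₁ = Fintype.card (Idx s)) {δ : ℝ} (hδ : N₁ * δ ≤ 1 / 9)
    (hf : PP f δ d) :
    PP (ORf s) (1/3) (Fintype.card (Idx N₁) * d) := by
  subst hN₁
  have hiso := isolation (Fin s)
  rw [Fintype.card_fin] at hiso
  obtain ⟨w₁, hw₁, hI₁⟩ := hiso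
  obtain ⟨w₂, hw₂, hI₂⟩ := isolation (Idx s)
  exact main_aux f a e he hs hδ hf w₁ hw₁ hI₁ w₂ hw₂ hI₂

lemma numeric (s : ℕ) (hs : 16 ≤ s) {N₁ : ℕ} (hN₁ : N₁ = Fintype.card (Idx s)) :
    ((Nat.log 2 (9 * N₁) + 1 : ℕ) : ℝ) ≤ 11/2 * Real.logb 2 (Real.logb 2 s) ∧
      0 < N₁ := by
  have hcard : N₁ = 11 * (Nat.log 2 s + 1) := by rw [hN₁]; simp
  have hL4 : 4 ≤ Nat.log 2 s := Nat.le_log_of_pow_le (by norm_num) (by simpa using hs)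
  refine ⟨?_, by omega⟩
  have hLs : ((Nat.log 2 s : ℕ) : ℝ) ≤ Real.logb 2 s := Real.natLog_le_logb s 2
  have hL4' : (4:ℝ) ≤ (Nat.log 2 s : ℕ) := by exact_mod_cast hL4
  have hl2 : 2 ≤ Real.logb 2 (Real.logb 2 s) := by
    rw [Real.le_logb_iff_rpow_le (by norm_num) (by linarith)]
    norm_num; linarith
  have h9 : ((9 * N₁ : ℕ) : ℝ) ≤ 2 ^ 8 * Real.logb 2 s := by
    rw [hcard]; push_cast
    linarith
  have h1 : ((Nat.log 2 (9 * N₁) : ℕ) : ℝ) ≤ Real.logb 2 ((9 * N₁ : ℕ) : ℝ) :=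
    Real.natLog_le_logb _ 2
  have h2 : Real.logb 2 ((9 * N₁ : ℕ) : ℝ) ≤ Real.logb 2 (2 ^ 8 * Real.logb 2 s) :=
    Real.logb_le_logb_of_le (by norm_num) (by rw [hcard]; positivity) h9
  have h3 : Real.logb 2 (2 ^ 8 * Real.logb 2 s) = 8 + Real.logb 2 (Real.logb 2 s) := by
    rw [Real.logb_mul (by norm_num) (by linarith), Real.logb_pow]
    norm_num
  push_cast
  linarith

theorem high_sensitivity_lower_bound :
    ∃ C : ℝ, 0 < C ∧ ∀ (n : ℕ) (f : (Fin n → Bool) → Bool),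
      16 ≤ sensitivity f →
        (pdeg (1/3) (ORf (sensitivity f)) : ℝ) ≤
          C * (pdeg (1/3) f : ℝ) *
            (Real.logb 2 (Real.logb 2 (sensitivity f))) ^ 2 := by
  refine ⟨5000, by norm_num, fun n f hs => ?_⟩
  have hd : HasProbPoly f (1/3) (pdeg (1/3) f) := Nat.sInf_mem (exists_HasProbPoly f)
  set d := pdeg (1/3) f
  set s := sensitivity f with hsdef
  obtain ⟨a, -, ha⟩ := Finset.exists_mem_eq_sup (Finset.univ : Finset (Fin n → Bool))
    Finset.univ_nonempty (fun a : Fin n → Bool =>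
    (Finset.univ.filter (fun i : Fin n => f (Function.update a i (!(a i))) ≠ f a)).card)
  have hcard : (Finset.univ.filter
      (fun i : Fin n => f (Function.update a i (!(a i))) ≠ f a)).card = s := ha.symm
  let e := Finset.orderEmbOfFin _ hcard
  obtain ⟨N₁, hN₁⟩ : ∃ N₁, N₁ = Fintype.card (Idx s) := ⟨_, rfl⟩
  obtain ⟨hnum, hpos⟩ := numeric s hs hN₁
  set M := Nat.log 2 (9 * N₁) + 1 with hM
  set ℓ := Real.logb 2 (Real.logb 2 s)
  have hamp := amplify hd.toPP (6 * M)
  have hδ : (N₁ : ℝ) * (8/9) ^ (6 * M) ≤ 1/9 := by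
    have h1 : ((8:ℝ)/9) ^ (6 * M) ≤ (1/2) ^ M := by
      rw [pow_mul]
      exact pow_le_pow_left₀ (by norm_num) (by norm_num) _
    have h2 : ((9 * N₁ : ℕ) : ℝ) ≤ 2 ^ M := by
      exact_mod_cast (Nat.lt_pow_succ_log_self (by norm_num) _).le
    have h3 : (2:ℝ) ^ M * (1/2) ^ M = 1 := by rw [← mul_pow]; norm_num
    have h4 : (0:ℝ) < (1/2) ^ M := by positivity
    have h5 := mul_le_mul_of_nonneg_right h2 h4.le
    rw [h3] at h5
    push_cast at h5
    have h6 := mul_le_mul_of_nonneg_left h1 (Nat.cast_nonneg (α := ℝ) N₁)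
    linarith
  have hfin := main_pp f a e e.injective (fun j => by
    have := Finset.orderEmbOfFin_mem _ hcard j
    exact (Finset.mem_filter.1 this).2) hN₁ hδ hamp
  have hle : pdeg (1/3) (ORf s) ≤ Fintype.card (Idx N₁) * (2 * (6 * M) * d) :=
    Nat.sInf_le hfin.toHas
  have hI : Fintype.card (Idx N₁) ≤ 11 * M := by
    simp only [Fintype.card_prod, Fintype.card_fin, hM]
    have : Nat.log 2 N₁ ≤ Nat.log 2 (9 * N₁) := Nat.log_mono_right (by omega)
    omega
  have hle2 : pdeg (1/3) (ORf s) ≤ 132 * d * M ^ 2 :=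
    calc _ ≤ _ := hle
      _ ≤ 11 * M * (2 * (6 * M) * d) := Nat.mul_le_mul_right _ hI
      _ = _ := by ring
  have hle3 : (pdeg (1/3) (ORf s) : ℝ) ≤ 132 * d * (M:ℝ) ^ 2 := by exact_mod_cast hle2
  have hM2 : (M:ℝ) ^ 2 ≤ (11/2 * ℓ) ^ 2 := pow_le_pow_left₀ (Nat.cast_nonneg _) hnum 2
  have hd0 : (0:ℝ) ≤ d := Nat.cast_nonneg _
  calc (pdeg (1/3) (ORf s) : ℝ) ≤ 132 * d * (M:ℝ) ^ 2 := hle3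
    _ ≤ 132 * d * (11/2 * ℓ) ^ 2 := mul_le_mul_of_nonneg_left hM2 (by positivity)
    _ = 3993 * (d * ℓ ^ 2) := by ring
    _ ≤ 5000 * (d * ℓ ^ 2) := mul_le_mul_of_nonneg_right (by norm_num) (by positivity)
    _ = 5000 * d * ℓ ^ 2 := by ring
end

section
/- There exist absolute constants C ≥ 1 and k ≥ 1 such that the following holds. Let f : {0,1}^n → {0,1} be truly n-variate with sensitivity s ≥ 2. Then there exist positive integers r and t with r ≤ C·s^k and t ≥ n/(C·s^k), and a projection ν : [n] → [r+t], such that the projected function g = f|_ν : {0,1}^r × {0,1}^t → {0,1} (inputs split into the first r coordinates y and the last t coordinates z) has the following property: for every j ∈ [t] there exists a^{(j)} ∈ {0,1}^r such that either g(a^{(j)}, b) = b_j for all b ∈ {0,1}^t, or g(a^{(j)}, b) = 1 − b_j for all b ∈ {0,1}^t. -/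
open scoped Classical

set_option linter.unusedSectionVars false
namespace PA
open Finset

lemma neg_one_pow_card_symmDiff {ι : Type*} [DecidableEq ι] (X : Finset ι) (j : ι) :
    (-1 : ℝ) ^ #(symmDiff X {j}) = - (-1) ^ #X := by
  by_cases h : j ∈ X
  · have : symmDiff X {j} = X.erase j := by
      ext a; simp only [mem_symmDiff, mem_singleton, mem_erase]; grind
    rw [this, ← Finset.card_erase_add_one h, pow_succ]; ring
  · have : symmDiff X {j} = insert j X := by
      ext a; simp only [mem_symmDiff, mem_singleton, mem_insert]; grind
    rw [this, Finset.card_insert_of_notMem h, pow_succ]; ring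

section huang
variable {ι : Type*} [Fintype ι] [LinearOrder ι]

/-- The sign used in the signed adjacency matrix of the cube. -/
noncomputable def sg (i : ι) (T : Finset ι) : ℝ := (-1) ^ #(T.filter (· < i))

lemma sg_sq (i : ι) (T : Finset ι) : sg i T * sg i T = 1 := by
  unfold sg; rw [← mul_pow]; simp

lemma sg_flip_ge {i j : ι} (h : i ≤ j) (T : Finset ι) : sg i (symmDiff T {j}) = sg i T := by
  unfold sg
  congr 2
  ext a; simp only [mem_symmDiff, mem_singleton, mem_filter]
  constructor
  · rintro ⟨h1 | h1, h2⟩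
    · exact ⟨h1.1, h2⟩
    · exact absurd (h1.1 ▸ h2) (not_lt.mpr h)
  · rintro ⟨h1, h2⟩
    refine ⟨Or.inl ⟨h1, ?_⟩, h2⟩
    rintro rfl
    exact absurd h2 (not_lt.mpr h)

lemma sg_flip_lt {i j : ι} (h : j < i) (T : Finset ι) : sg i (symmDiff T {j}) = - sg i T := by
  unfold sg
  rw [← neg_one_pow_card_symmDiff _ j]
  congr 2
  ext a; simp only [mem_symmDiff, mem_singleton, mem_filter]
  grind

/-- Huang's signed adjacency operator. -/
noncomputable def hA : (Finset ι → ℝ) →ₗ[ℝ] (Finset ι → ℝ) where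
  toFun v T := ∑ i, sg i T * v (symmDiff T {i})
  map_add' v w := by ext T; simp [mul_add, sum_add_distrib]
  map_smul' c v := by ext T; simp [mul_sum, mul_left_comm]

lemma hA_apply (v : Finset ι → ℝ) (T : Finset ι) :
    hA v T = ∑ i, sg i T * v (symmDiff T {i}) := rfl

lemma hA_sq (v : Finset ι → ℝ) (T : Finset ι) : hA (hA v) T = Fintype.card ι * v T := by
  let a : ι → ι → ℝ := fun i j => sg i T * (sg j (symmDiff T {i}) * v (symmDiff (symmDiff T {i}) {j}))
  have h1 : hA (hA v) T = ∑ i, ∑ j, a i j := by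
    rw [hA_apply]; simp only [hA_apply, mul_sum, a]
  have h2 : ∀ i j, a i j + a j i = if i = j then 2 * v T else 0 := by
    intro i j
    have hsw : symmDiff (symmDiff T {j}) {i} = symmDiff (symmDiff T {i}) {j} := by
      rw [symmDiff_assoc, symmDiff_comm ({j} : Finset ι), ← symmDiff_assoc]
    rcases lt_trichotomy i j with h | h | h
    · rw [if_neg h.ne]
      simp only [a]
      rw [hsw, sg_flip_lt h, sg_flip_ge h.le]; ring
    · subst h
      simp only [a, if_true]
      rw [sg_flip_ge le_rfl, symmDiff_assoc, symmDiff_self, symmDiff_bot, ← mul_assoc, sg_sq]; ring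
    · rw [if_neg h.ne']
      simp only [a]
      rw [hsw, sg_flip_lt h, sg_flip_ge h.le]; ring
  have h3 : ∑ i, ∑ j, a i j + ∑ i, ∑ j, a i j = 2 * (Fintype.card ι * v T) := by
    conv_lhs => rhs; rw [sum_comm]
    rw [← sum_add_distrib]
    simp only [← sum_add_distrib, h2]
    simp; ring
  rw [h1]; linarith

/-- The parity operator. -/
noncomputable def hP : (Finset ι → ℝ) →ₗ[ℝ] (Finset ι → ℝ) where
  toFun v T := (-1) ^ #T * v T
  map_add' v w := by ext T; simp [mul_add]
  map_smul' c v := by ext T; simp [mul_left_comm]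

lemma hP_apply (v : Finset ι → ℝ) (T : Finset ι) : hP v T = (-1) ^ #T * v T := rfl

lemma hA_hP (v : Finset ι → ℝ) (T : Finset ι) : hA (hP v) T = - ((-1) ^ #T * hA v T) := by
  simp only [hA_apply, hP_apply, neg_one_pow_card_symmDiff, mul_sum, ← sum_neg_distrib]
  refine sum_congr rfl fun i _ => by ring

lemma huang_aux (H : Finset (Finset ι)) (u : Finset ι → ℝ) (hu : u ≠ 0)
    (hs : ∀ T, T ∉ H → u T = 0) (hA : ∀ T, hA u T = √(Fintype.card ι) * u T) :
    ∃ T ∈ H, √(Fintype.card ι : ℝ) ≤ #{i | symmDiff T {i} ∈ H} := by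
  obtain ⟨T, -, hT⟩ := exists_max_image (univ : Finset (Finset ι)) (fun T => |u T|) ⟨∅, mem_univ _⟩
  have hpos : 0 < |u T| := by
    obtain ⟨T', h'⟩ := Function.ne_iff.mp hu
    exact lt_of_lt_of_le (abs_pos.mpr h') (hT T' (mem_univ _))
  refine ⟨T, ?_, ?_⟩
  · by_contra h; rw [hs T h] at hpos; simp at hpos
  · have h1 : √(Fintype.card ι) * |u T| ≤ #{i | symmDiff T {i} ∈ H} * |u T| := by
      calc √(Fintype.card ι) * |u T| = |PA.hA u T| := by
              rw [hA, abs_mul, abs_of_nonneg (Real.sqrt_nonneg _)]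
        _ ≤ ∑ i, |sg i T * u (symmDiff T {i})| := abs_sum_le_sum_abs _ _
        _ ≤ ∑ i, if symmDiff T {i} ∈ H then |u T| else 0 := by
              refine sum_le_sum fun i _ => ?_
              have : |sg i T| = 1 := by unfold sg; simp
              rw [abs_mul, this, one_mul]
              split_ifs with h
              · exact hT _ (mem_univ _)
              · rw [hs _ h]; simp
        _ = _ := by rw [← sum_filter, sum_const, nsmul_eq_mul]
    exact le_of_mul_le_mul_right h1 hpos

lemma huang (H : Finset (Finset ι)) (hH : 2 ^ Fintype.card ι < 2 * #H) (hpos : 0 < Fintype.card ι) :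
    ∃ T ∈ H, √(Fintype.card ι : ℝ) ≤ #{i | symmDiff T {i} ∈ H} := by
  set q := √(Fintype.card ι : ℝ) with hq
  have hqpos : 0 < q := Real.sqrt_pos.mpr (by exact_mod_cast hpos)
  have hqq : q * q = Fintype.card ι := Real.mul_self_sqrt (by positivity)
  let R : (Finset ι → ℝ) →ₗ[ℝ] ({T // T ∉ H} → ℝ) := LinearMap.funLeft ℝ ℝ Subtype.val
  let Φ := (R ∘ₗ (hA + q • LinearMap.id)).prod (R ∘ₗ hP ∘ₗ (hA - q • LinearMap.id))
  have hker : LinearMap.ker Φ ≠ ⊥ := by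
    apply LinearMap.ker_ne_bot_of_finrank_lt
    rw [Module.finrank_prod, Module.finrank_fintype_fun_eq_card, Module.finrank_fintype_fun_eq_card,
      Fintype.card_finset]
    have : Fintype.card {T // T ∉ H} = 2 ^ Fintype.card ι - #H := by
      rw [Fintype.card_subtype_compl, Fintype.card_finset]; simp
    have h2 : 0 < 2 ^ Fintype.card ι := by positivity
    rw [this]; omega
  obtain ⟨v, hv, hv0⟩ := (Submodule.ne_bot_iff _).mp hker
  have hv' : Φ v = 0 := hv
  have hv1 : ∀ T, T ∉ H → hA v T + q * v T = 0 := by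
    intro T hT
    have := congrFun (congrArg Prod.fst hv') ⟨T, hT⟩
    simpa [Φ, R, LinearMap.funLeft] using this
  have hv2 : ∀ T, T ∉ H → hP (hA v - q • v) T = 0 := by
    intro T hT
    have := congrFun (congrArg Prod.snd hv') ⟨T, hT⟩
    simpa [Φ, R, LinearMap.funLeft] using this
  by_cases h0 : hA v + q • v = 0
  · refine huang_aux H (hP (hA v - q • v)) ?_ hv2 ?_
    · intro h
      apply hv0
      ext T
      have h1 := congrFun h T
      have h2 := congrFun h0 T
      rw [hP_apply] at h1
      simp at h1 h2
      have : 2 * q * v T = 0 := by linarith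
      simpa [hqpos.ne'] using this
    · intro T
      rw [hA_hP, hP_apply, map_sub, map_smul]
      simp only [Pi.sub_apply, Pi.smul_apply, smul_eq_mul, hA_sq]
      rw [← hq, ← hqq]; ring
  · refine huang_aux H (hA v + q • v) h0 (fun T hT => by simpa using hv1 T hT) ?_
    intro T
    rw [map_add, map_smul]
    simp only [Pi.add_apply, Pi.smul_apply, smul_eq_mul, hA_sq]
    rw [← hq, ← hqq]; ring
end huang

lemma alt_sum_zero {ι : Type*} [Fintype ι] [LinearOrder ι] (G : Finset ι → ℝ)
    (hG : ∀ T, G T = 1 ∨ G T = -1) (s : ℕ)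
    (hs : ∀ T, #{i | G (symmDiff T {i}) ≠ G T} ≤ s) (hc : s ^ 2 < Fintype.card ι) :
    ∑ T, (-1) ^ #T * G T = 0 := by
  set χ : Finset ι → ℝ := fun T => (-1) ^ #T * G T with hχ
  have hχ1 : ∀ T, χ T = 1 ∨ χ T = -1 := by
    intro T
    rcases neg_one_pow_eq_or ℝ #T with h | h <;> rcases hG T with h' | h' <;> simp [hχ, h, h']
  have key : ∀ e : ℝ, 2 * #{T | χ T = e} ≤ 2 ^ Fintype.card ι := by
    intro e
    by_contra hlt
    push Not at hlt
    obtain ⟨T, hT, h2⟩ := huang _ hlt (by omega)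
    have hT' : χ T = e := by simpa using hT
    have h3 : #{i | symmDiff T {i} ∈ ({T | χ T = e} : Finset (Finset ι))}
        ≤ #{i | G (symmDiff T {i}) ≠ G T} := by
      apply card_le_card
      intro i hi
      simp only [mem_filter, mem_univ, true_and] at hi ⊢
      intro h4
      have h5 : χ (symmDiff T {i}) = - χ T := by
        simp only [hχ, neg_one_pow_card_symmDiff, h4]; ring
      have : χ T = 0 := by linarith
      rcases hχ1 T with h | h <;> rw [h] at this <;> norm_num at this
    have h4 : √(Fintype.card ι : ℝ) ≤ s := h2.trans (by exact_mod_cast h3.trans (hs T))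
    have h5 := (Real.sqrt_le_left (by positivity)).mp h4
    have : Fintype.card ι ≤ s ^ 2 := by exact_mod_cast h5
    omega
  have h1 := key 1
  have h2 := key (-1)
  have hdis : Disjoint (univ.filter fun T => χ T = 1) (univ.filter fun T => χ T = -1) := by
    rw [disjoint_filter]; intro T _ h h'; rw [h] at h'; norm_num at h'
  have hun : (univ.filter fun T => χ T = 1) ∪ (univ.filter fun T => χ T = -1) = univ := by
    ext T; simp [hχ1 T]
  have hcard : #{T | χ T = 1} + #{T | χ T = -1} = 2 ^ Fintype.card ι := by
    rw [← card_union_of_disjoint hdis, hun, card_univ, Fintype.card_finset]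
  have heq : #{T | χ T = 1} = #{T | χ T = -1} := by omega
  rw [← hun, sum_union hdis, sum_congr rfl (g := fun _ => (1 : ℝ)) (by intro T hT; simpa using hT),
    sum_congr (s₁ := univ.filter fun T => χ T = -1) rfl (g := fun _ => (-1 : ℝ))
      (by intro T hT; simpa using hT)]
  simp [heq]

lemma alt_sum_powerset {α : Type*} [Fintype α] [LinearOrder α] (G : Finset α → ℝ)
    (hG : ∀ T, G T = 1 ∨ G T = -1) (s : ℕ)
    (hs : ∀ T, #{i | G (symmDiff T {i}) ≠ G T} ≤ s) (S : Finset α) (hc : s ^ 2 < #S) :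
    ∑ T ∈ S.powerset, (-1) ^ #T * G T = 0 := by
  let e : {x // x ∈ S} ↪ α := Function.Embedding.subtype _
  have h := alt_sum_zero (ι := {x // x ∈ S}) (fun T => G (T.map e)) (fun T => hG _) s ?_ (by simpa using hc)
  · rw [← h]
    symm
    refine sum_nbij' (fun T => T.map e) (fun T => T.subtype (· ∈ S)) ?_ ?_ ?_ ?_ ?_
    · intro T _
      simp only [mem_powerset]
      intro x hx
      obtain ⟨y, _, rfl⟩ := mem_map.mp hx
      exact y.2
    · intro T _; simp
    · intro T _; ext x; simp [e]
    · intro T hT; ext x; simp [e]; intro hx; exact mem_powerset.mp hT hx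
    · intro T _; simp
  · intro T
    refine le_trans ?_ (hs (T.map e))
    rw [← card_map e]
    apply card_le_card
    intro x hx
    obtain ⟨y, hy, rfl⟩ := mem_map.mp hx
    simp only [mem_filter, mem_univ, true_and] at hy ⊢
    have : (symmDiff T {y}).map e = symmDiff (T.map e) {e y} := by
      ext z; simp [mem_symmDiff, e]
      grind
    rwa [← this]

/-- Moebius inversion on the subset lattice. -/
lemma moebius {α : Type*} [DecidableEq α] (G : Finset α → ℝ) (U : Finset α) :
    G U = ∑ S ∈ U.powerset, (-1) ^ #S * ∑ T ∈ S.powerset, (-1) ^ #T * G T := by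
  simp only [mul_sum]
  rw [sum_comm' (t' := U.powerset) (s' := fun T => Icc T U)]
  · rw [sum_eq_single_of_mem U (by simp)]
    · rw [Icc_self, sum_singleton, ← mul_assoc, ← mul_pow]; simp
    · intro T hT hne
      have hTU := mem_powerset.mp hT
      have : ∑ S ∈ Icc T U, (-1 : ℝ) ^ #S * ((-1) ^ #T * G T)
          = (∑ X ∈ (U \ T).powerset, (-1 : ℝ) ^ #X) * G T := by
        rw [sum_mul]
        refine sum_nbij' (fun S => S \ T) (fun X => X ∪ T) ?_ ?_ ?_ ?_ ?_
        · intro S hS; simp only [mem_Icc, mem_powerset] at hS ⊢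
          exact sdiff_subset_sdiff hS.2 le_rfl
        · intro X hX; simp only [mem_Icc, mem_powerset] at hX ⊢
          exact ⟨subset_union_right, union_subset (hX.trans sdiff_subset) hTU⟩
        · intro S hS; simp only [mem_Icc] at hS
          exact sdiff_union_of_subset hS.1
        · intro X hX; simp only [mem_powerset] at hX
          ext x; simp only [mem_sdiff, mem_union]
          have := @hX x
          simp only [mem_sdiff] at this
          tauto
        · intro S hS; simp only [mem_Icc] at hS
          have h1 : #S = #(S \ T) + #T := by rw [card_sdiff_add_card_eq_card hS.1]
          rw [h1, pow_add]
          have h2 : (-1 : ℝ) ^ #T * (-1) ^ #T = 1 := by rw [← mul_pow]; simp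
          linear_combination ((-1 : ℝ) ^ #(S \ T) * G T) * h2
      rw [this]
      have hn : (U \ T).Nonempty := by
        rw [sdiff_nonempty]; intro h; exact hne (subset_antisymm hTU h)
      have h0 := sum_powerset_neg_one_pow_card_of_nonempty hn
      have : (∑ X ∈ (U \ T).powerset, (-1 : ℝ) ^ #X) = 0 := by exact_mod_cast congrArg (Int.cast (R := ℝ)) h0
      rw [this, zero_mul]
  · intro S T
    simp only [mem_powerset, mem_Icc]
    constructor
    · rintro ⟨h1, h2⟩; exact ⟨⟨h2, h1⟩, h2.trans h1⟩
    · rintro ⟨⟨h1, h2⟩, h3⟩; exact ⟨h2, h1⟩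


/-- Products over the lower half. -/
lemma prod_low (j m : ℕ) (h : m + 1 ≤ j) :
    (∏ l ∈ Icc 1 m, ((j : ℝ) ^ 2 - (l : ℝ) ^ 2)) * ((j - 1 - m).factorial : ℝ) * (j.factorial : ℝ)
      = ((j - 1).factorial : ℝ) * ((j + m).factorial : ℝ) := by
  induction m with
  | zero => simp
  | succ m ih =>
    have ih := ih (by omega)
    rw [prod_Icc_succ_top (by omega)]
    have h1 : j - 1 - m = (j - 1 - (m + 1)) + 1 := by omega
    have h2 : j + (m + 1) = (j + m) + 1 := by omega
    rw [h1, Nat.factorial_succ] at ih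
    rw [h2, Nat.factorial_succ]
    have h3 : ((j - 1 - (m + 1) + 1 : ℕ) : ℝ) = (j : ℝ) - (m + 1) := by
      have : j - 1 - (m + 1) + 1 = j - (m + 1) := by omega
      rw [this, Nat.cast_sub (by omega)]; push_cast; ring
    rw [Nat.cast_mul, h3] at ih
    push_cast
    linear_combination ((j : ℝ) + m + 1) * ih

lemma prod_all (j d : ℕ) (hj : 1 ≤ j) (h : j ≤ d) :
    (∏ l ∈ (Icc 1 d).erase j, |(j : ℝ) ^ 2 - (l : ℝ) ^ 2|) * 2 * ((d.factorial : ℝ) ^ 2)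
      = (∏ l ∈ (Icc 1 d).erase j, (l : ℝ) ^ 2) * ((d - j).factorial : ℝ) * ((d + j).factorial : ℝ) := by
  induction d, h using Nat.le_induction with
  | base =>
    obtain ⟨m, rfl⟩ : ∃ m, j = m + 1 := ⟨j - 1, by omega⟩
    have he : (Icc 1 (m + 1)).erase (m + 1) = Icc 1 m := by
      ext x; simp only [mem_erase, mem_Icc]; omega
    rw [he]
    have h1 := prod_low (m + 1) m le_rfl
    have h2 : ∏ l ∈ Icc 1 m, |((m + 1 : ℕ) : ℝ) ^ 2 - (l : ℝ) ^ 2|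
        = ∏ l ∈ Icc 1 m, (((m + 1 : ℕ) : ℝ) ^ 2 - (l : ℝ) ^ 2) := by
      refine prod_congr rfl fun l hl => abs_of_nonneg ?_
      simp only [mem_Icc] at hl
      have : (l : ℝ) ≤ ((m + 1 : ℕ) : ℝ) := by exact_mod_cast (by omega : l ≤ m + 1)
      have h0 : (0 : ℝ) ≤ l := by positivity
      nlinarith
    have h3 : ∏ l ∈ Icc 1 m, (l : ℝ) ^ 2 = (m.factorial : ℝ) ^ 2 := by
      have hI : Icc 1 m = Ico 1 (m + 1) := by ext x; simp only [mem_Icc, mem_Ico]; omega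
      rw [prod_pow, ← Finset.prod_Ico_id_eq_factorial, hI]; push_cast; rfl
    rw [h2, h3]
    have h4 : m + 1 + (m + 1) = (m + 1 + m) + 1 := by omega
    rw [h4, Nat.factorial_succ (m + 1 + m)]
    simp only [Nat.add_sub_cancel, Nat.sub_self, Nat.factorial_zero, Nat.factorial_succ m] at h1 ⊢
    push_cast at h1 ⊢
    linear_combination (2 * (m + 1) * (m.factorial : ℝ)) * h1
  | succ d hd ih =>
    have he : (Icc 1 (d + 1)).erase j = insert (d + 1) ((Icc 1 d).erase j) := by
      ext x; simp only [mem_erase, mem_Icc, mem_insert]; omega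
    have hn : d + 1 ∉ (Icc 1 d).erase j := by simp
    rw [he, prod_insert hn, prod_insert hn]
    have h1 : d + 1 - j = (d - j) + 1 := by omega
    have h2 : d + 1 + j = (d + j) + 1 := by omega
    rw [h1, h2, Nat.factorial_succ, Nat.factorial_succ, Nat.factorial_succ]
    have h3 : |(j : ℝ) ^ 2 - ((d + 1 : ℕ) : ℝ) ^ 2| = ((d : ℝ) + 1) ^ 2 - (j : ℝ) ^ 2 := by
      rw [abs_sub_comm, abs_of_nonneg]
      · push_cast; ring
      · have : (j : ℝ) ≤ ((d + 1 : ℕ) : ℝ) := by exact_mod_cast (by omega : j ≤ d + 1)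
        have h0 : (0 : ℝ) ≤ j := by positivity
        nlinarith
    rw [h3]
    push_cast [Nat.cast_sub hd]
    linear_combination ((((d : ℝ) + 1) ^ 2 - (j : ℝ) ^ 2) * (d + 1) ^ 2) * ih

lemma prod_ratio_le (j d : ℕ) (hj : 1 ≤ j) (h : j ≤ d) :
    ∏ l ∈ (Icc 1 d).erase j, ((l : ℝ) ^ 2 / |(j : ℝ) ^ 2 - (l : ℝ) ^ 2|) ≤ 2 := by
  rw [prod_div_distrib]
  have hp := prod_all j d hj h
  set A := ∏ l ∈ (Icc 1 d).erase j, |(j : ℝ) ^ 2 - (l : ℝ) ^ 2| with hA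
  set B := ∏ l ∈ (Icc 1 d).erase j, (l : ℝ) ^ 2
  have hApos : 0 < A := by
    refine prod_pos fun l hl => abs_pos.mpr ?_
    simp only [mem_erase, mem_Icc] at hl
    intro h0
    have h1 : (j : ℝ) ^ 2 = (l : ℝ) ^ 2 := by linarith
    have h2 : (j : ℝ) = l := by
      exact (pow_left_inj₀ (by positivity) (by positivity) (by norm_num)).mp h1
    exact hl.1 (by exact_mod_cast h2.symm)
  have hf : (d.factorial : ℝ) ^ 2 ≤ ((d - j).factorial : ℝ) * ((d + j).factorial : ℝ) := by
    have := Nat.factorial_mul_factorial_dvd_factorial_add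
    have h1 : d.factorial * d.descFactorial j ≤ d.factorial * (d + 1).ascFactorial j := by
      apply Nat.mul_le_mul_left
      calc d.descFactorial j ≤ d ^ j := Nat.descFactorial_le_pow _ _
        _ ≤ (d + 1) ^ j := Nat.pow_le_pow_left (by omega) _
        _ ≤ _ := Nat.pow_succ_le_ascFactorial _ _
    have h2 := Nat.factorial_mul_descFactorial h
    have h3 := Nat.factorial_mul_ascFactorial d j
    have h4 : d.factorial ^ 2 ≤ (d - j).factorial * (d + j).factorial := by
      calc d.factorial ^ 2 = (d - j).factorial * (d.factorial * d.descFactorial j) := by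
            rw [sq]; nth_rewrite 2 [← h2]; ring
        _ ≤ (d - j).factorial * (d.factorial * (d + 1).ascFactorial j) := Nat.mul_le_mul_left _ h1
        _ = _ := by rw [h3]
    exact_mod_cast h4
  rw [div_le_iff₀ hApos]
  have hFpos : (0 : ℝ) < (d.factorial : ℝ) ^ 2 := by positivity
  have hB : 0 ≤ B := prod_nonneg fun l _ => by positivity
  have : B * (d.factorial : ℝ) ^ 2 ≤ (2 * A) * (d.factorial : ℝ) ^ 2 := by
    calc B * (d.factorial : ℝ) ^ 2 ≤ B * (((d - j).factorial : ℝ) * ((d + j).factorial : ℝ)) := by gcongr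
      _ = _ := by linear_combination -hp
  exact le_of_mul_le_mul_right this hFpos

lemma tele_sum (d : ℕ) : ∑ j ∈ Icc 1 d, (2 : ℝ) / (4 * (j : ℝ) ^ 2 - 1) = 1 - 1 / (2 * (d : ℝ) + 1) := by
  induction d with
  | zero => simp
  | succ d ih =>
    rw [sum_Icc_succ_top (by omega), ih]
    have h1 : (2 * (d : ℝ) + 1) ≠ 0 := by positivity
    have h2 : (2 * ((d : ℝ) + 1) + 1) ≠ 0 := by positivity
    have h3 : 4 * ((d : ℝ) + 1) ^ 2 - 1 = (2 * (d : ℝ) + 1) * (2 * ((d : ℝ) + 1) + 1) := by ring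
    push_cast
    rw [h3]
    field_simp
    ring

/-- A bounded polynomial on `{0, ..., 4d^2}` of degree at most `d` cannot jump from -1 to 1
between 0 and 1. -/
lemma no_jump (d : ℕ) (q : Polynomial ℝ) (hq : q.natDegree ≤ d) (h0 : q.eval 0 = -1)
    (h1 : q.eval 1 = 1) (hb : ∀ k : ℕ, k ≤ 4 * d ^ 2 → |q.eval (k : ℝ)| ≤ 1) : False := by
  -- nodes: index 0 is the point 1, index j is 4 j^2
  let v : ℕ → ℝ := fun j => if j = 0 then 1 else 4 * (j : ℝ) ^ 2
  have hv0 : v 0 = 1 := by simp [v]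
  have hvj : ∀ j, 1 ≤ j → v j = 4 * (j : ℝ) ^ 2 := fun j hj => by simp [v]; omega
  have hj1 : ∀ j : ℕ, 1 ≤ j → (1 : ℝ) ≤ (j : ℝ) ^ 2 := fun j hj => by
    have : (1 : ℝ) ≤ j := by exact_mod_cast hj
    nlinarith
  have hinj : Set.InjOn v (Finset.range (d + 1) : Set ℕ) := by
    intro a _ b _ hab
    rcases Nat.eq_zero_or_pos a with ha | ha <;> rcases Nat.eq_zero_or_pos b with hb' | hb'
    · omega
    · rw [ha, hv0, hvj b hb'] at hab; have := hj1 b hb'; linarith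
    · rw [hb', hv0, hvj a ha] at hab; have := hj1 a ha; linarith
    · rw [hvj a ha, hvj b hb'] at hab
      have h2 : (a : ℝ) ^ 2 = (b : ℝ) ^ 2 := by linarith
      have h3 : (a : ℝ) = b := (pow_left_inj₀ (by positivity) (by positivity) (by norm_num)).mp h2
      exact_mod_cast h3
  have hdeg : q.degree < #(Finset.range (d + 1)) := by
    rw [card_range]
    exact lt_of_le_of_lt Polynomial.degree_le_natDegree (by exact_mod_cast Nat.lt_succ_of_le hq)
  have hinterp := Lagrange.eq_interpolate hinj hdeg
  have hev : q.eval 0 = ∑ i ∈ Finset.range (d + 1), q.eval (v i) *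
      ∏ l ∈ (Finset.range (d + 1)).erase i, ((v i - v l)⁻¹ * (0 - v l)) := by
    conv_lhs => rw [hinterp]
    rw [Lagrange.interpolate_apply, Polynomial.eval_finsetSum]
    refine sum_congr rfl fun i _ => ?_
    rw [Polynomial.eval_mul, Polynomial.eval_C, Lagrange.basis, Polynomial.eval_prod]
    congr 1
    refine prod_congr rfl fun l _ => ?_
    simp [Lagrange.basisDivisor]
  have hr : Finset.range (d + 1) = insert 0 (Icc 1 d) := by
    ext x; simp only [mem_range, mem_insert, mem_Icc]; omega
  rw [hr, sum_insert (by simp), hv0, h0, h1, one_mul] at hev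
  have he0 : (insert 0 (Icc 1 d)).erase 0 = Icc 1 d := by
    ext x; simp only [mem_erase, mem_insert, mem_Icc]; omega
  rw [he0] at hev
  have hA : 1 ≤ ∏ l ∈ Icc 1 d, ((1 - v l)⁻¹ * (0 - v l)) := by
    refine le_trans (le_of_eq (prod_const_one (s := Icc 1 d) (M := ℝ)).symm) ?_
    refine prod_le_prod (fun _ _ => zero_le_one) fun l hl => ?_
    have hl' := hj1 l (mem_Icc.mp hl).1
    rw [hvj l (mem_Icc.mp hl).1]
    have h2 : (1 - 4 * (l : ℝ) ^ 2)⁻¹ * (0 - 4 * (l : ℝ) ^ 2) = 4 * (l : ℝ) ^ 2 / (4 * (l : ℝ) ^ 2 - 1) := by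
      rw [← neg_sub (4 * (l : ℝ) ^ 2) 1, inv_neg, div_eq_mul_inv]; ring
    rw [h2, le_div_iff₀ (by linarith)]
    linarith
  have hB : ∀ i ∈ Icc 1 d, |q.eval (v i) *
      ∏ l ∈ (insert 0 (Icc 1 d)).erase i, ((v i - v l)⁻¹ * (0 - v l))| ≤ 2 / (4 * (i : ℝ) ^ 2 - 1) := by
    intro i hi
    have hi' := mem_Icc.mp hi
    have h2 : (insert 0 (Icc 1 d)).erase i = insert 0 ((Icc 1 d).erase i) := by
      ext x; simp only [mem_erase, mem_insert, mem_Icc]; omega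
    have hq1 : |q.eval (v i)| ≤ 1 := by
      have := hb (4 * i ^ 2) (by gcongr; exact hi'.2)
      rw [hvj i hi'.1]
      push_cast at this
      exact this
    have hpos : (0 : ℝ) < 4 * (i : ℝ) ^ 2 - 1 := by have := hj1 i hi'.1; linarith
    have hprod : ∏ l ∈ (Icc 1 d).erase i, |(v i - v l)⁻¹ * (0 - v l)| ≤ 2 := by
      refine le_trans (le_of_eq ?_) (prod_ratio_le i d hi'.1 hi'.2)
      refine prod_congr rfl fun l hl => ?_
      simp only [mem_erase, mem_Icc] at hl
      rw [hvj i hi'.1, hvj l hl.2.1, zero_sub, abs_mul, abs_neg, abs_inv, ← mul_sub, abs_mul, abs_mul,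
        abs_of_pos (by norm_num : (0 : ℝ) < 4), abs_of_nonneg (by positivity : (0 : ℝ) ≤ (l : ℝ) ^ 2),
        mul_inv, div_eq_mul_inv]
      ring
    rw [h2, prod_insert (by simp), hv0, abs_mul, abs_mul, abs_prod]
    have h3 : |(v i - 1)⁻¹ * (0 - 1)| = 1 / (4 * (i : ℝ) ^ 2 - 1) := by
      rw [hvj i hi'.1, zero_sub, abs_mul, abs_neg, abs_one, mul_one, abs_inv, abs_of_pos hpos, one_div]
    rw [h3]
    calc _ ≤ 1 * (1 / (4 * (i : ℝ) ^ 2 - 1) * 2) := by gcongr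
      _ = _ := by ring
  have hC := (abs_sum_le_sum_abs _ _).trans (sum_le_sum hB)
  rw [tele_sum] at hC
  have h4 : (0 : ℝ) < 1 / (2 * d + 1) := by positivity
  have h5 := neg_le_of_abs_le hC
  linarith

lemma count_supersets {κ : Type*} [Fintype κ] [DecidableEq κ] (I : Finset κ) (k : ℕ) :
    #{Y ∈ powersetCard k (univ : Finset κ) | I ⊆ Y} * (Fintype.card κ).descFactorial #I
      = k.descFactorial #I * (Fintype.card κ).choose k := by
  by_cases hk : #I ≤ k
  · have h1 : #{Y ∈ powersetCard k (univ : Finset κ) | I ⊆ Y}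
        = (Fintype.card κ - #I).choose (k - #I) := by
      rw [← card_compl, ← card_powersetCard]
      refine card_nbij' (fun Y => Y \ I) (fun X => X ∪ I) ?_ ?_ ?_ ?_
      · intro Y hY
        simp only [coe_filter, mem_powersetCard, Set.mem_ofPred_eq, mem_coe] at hY ⊢
        refine ⟨fun x hx => ?_, ?_⟩
        · simp only [mem_sdiff] at hx; simpa using hx.2
        · rw [card_sdiff_of_subset hY.2, hY.1.2]
      · intro X hX
        simp only [coe_filter, mem_powersetCard, Set.mem_ofPred_eq, mem_coe] at hX ⊢
        refine ⟨⟨subset_univ _, ?_⟩, subset_union_right⟩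
        rw [card_union_of_disjoint, hX.2]
        · omega
        · rw [disjoint_left]; intro x hx; simpa using hX.1 hx
      · intro Y hY
        simp only [coe_filter, Set.mem_ofPred_eq] at hY
        exact sdiff_union_of_subset hY.2
      · intro X hX
        rw [mem_coe, mem_powersetCard] at hX
        have : ∀ x ∈ X, x ∉ I := fun x hx => by simpa using hX.1 hx
        ext x; simp only [mem_sdiff, mem_union]
        have := this x
        tauto
    have h2 := Nat.choose_mul (n := Fintype.card κ) (k := k) (s := #I) hk
    rw [h1, Nat.descFactorial_eq_factorial_mul_choose, Nat.descFactorial_eq_factorial_mul_choose]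
    calc _ = (#I).factorial * ((Fintype.card κ).choose #I * (Fintype.card κ - #I).choose (k - #I)) := by ring
      _ = _ := by rw [← h2]; ring
  · have h1 : #{Y ∈ powersetCard k (univ : Finset κ) | I ⊆ Y} = 0 := by
      rw [card_eq_zero, filter_eq_empty_iff]
      intro Y hY hI
      have := card_le_card hI
      rw [(mem_powersetCard.mp hY).2] at this
      omega
    rw [h1, Nat.descFactorial_of_lt (n := k) (by omega)]; simp

lemma blocks_bound {α κ : Type*} [DecidableEq α] [Fintype κ] [DecidableEq κ] (G : Finset α → ℝ)
    (hG : ∀ T, G T = 1 ∨ G T = -1) (c : Finset α → ℝ) (d : ℕ) (hd : ∀ S, d < #S → c S = 0)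
    (hGc : ∀ U, G U = ∑ S ∈ U.powerset, c S) (B : κ → Finset α)
    (hB : ∀ i j, i ≠ j → Disjoint (B i) (B j)) (h0 : G ∅ = -1) (h1 : ∀ i, G (B i) = 1)
    (hd1 : 1 ≤ d) : Fintype.card κ < 4 * d ^ 2 := by
  by_contra hlt
  push Not at hlt
  set b := Fintype.card κ with hb
  have hb1 : 1 ≤ b := le_trans (by nlinarith) hlt
  let N := univ.biUnion B
  let idx : Finset α → Finset κ := fun S => univ.filter (fun i => ¬ Disjoint S (B i))
  have hidx : ∀ S, #(idx S) ≤ #S := by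
    intro S
    have : ∀ i : κ, i ∈ idx S → ∃ x, x ∈ S ∧ x ∈ B i := by
      intro i hi
      simp only [idx, mem_filter, mem_univ, true_and, not_disjoint_iff] at hi
      exact hi
    rcases (idx S).eq_empty_or_nonempty with he | ⟨i0, hi0⟩
    · rw [he]; simp
    have hne : Nonempty α := ⟨(this i0 hi0).choose⟩
    choose! g hg using this
    refine card_le_card_of_injOn g (fun i hi => (hg i hi).1) ?_
    intro i hi j hj hij
    by_contra hne
    have := hB i j hne
    rw [disjoint_left] at this
    exact this (hg i hi).2 (hij ▸ (hg j hj).2)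
  have hG' : ∀ Y : Finset κ, G (Y.biUnion B)
      = ∑ S ∈ N.powerset, c S * if idx S ⊆ Y then 1 else 0 := by
    intro Y
    rw [hGc]
    simp only [mul_ite, mul_one, mul_zero]
    rw [← sum_filter]
    refine sum_congr ?_ fun _ _ => rfl
    ext S
    simp only [mem_powerset, mem_filter]
    constructor
    · intro h
      refine ⟨h.trans (biUnion_subset_biUnion_of_subset_left _ (subset_univ _)), ?_⟩
      intro i hi
      simp only [idx, mem_filter, mem_univ, true_and, not_disjoint_iff] at hi
      obtain ⟨x, hx, hxi⟩ := hi
      obtain ⟨j, hj, hxj⟩ := mem_biUnion.mp (h hx)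
      by_cases hij : i = j
      · rwa [hij]
      · exact absurd hxj (disjoint_left.mp (hB i j hij) hxi)
    · rintro ⟨h, h'⟩ x hx
      obtain ⟨j, _, hxj⟩ := mem_biUnion.mp (h hx)
      refine mem_biUnion.mpr ⟨j, h' ?_, hxj⟩
      simp only [idx, mem_filter, mem_univ, true_and, not_disjoint_iff]
      exact ⟨x, hx, hxj⟩
  let q : Polynomial ℝ := ∑ S ∈ N.powerset,
    Polynomial.C (c S / (b.descFactorial #(idx S) : ℝ)) * descPochhammer ℝ #(idx S)
  have hidxb : ∀ S, #(idx S) ≤ b := fun S => card_le_univ _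
  have hqdeg : q.natDegree ≤ d := by
    refine Polynomial.natDegree_sum_le_of_forall_le _ _ fun S _ => ?_
    by_cases hS : d < #S
    · rw [hd S hS]; simp
    · refine (Polynomial.natDegree_C_mul_le _ _).trans ?_
      rw [descPochhammer_natDegree]
      exact (hidx S).trans (not_lt.mp hS)
  have hqev : ∀ k : ℕ, q.eval (k : ℝ) * (b.choose k : ℝ)
      = ∑ Y ∈ powersetCard k (univ : Finset κ), G (Y.biUnion B) := by
    intro k
    simp only [hG']
    rw [sum_comm, Polynomial.eval_finsetSum, sum_mul]
    refine sum_congr rfl fun S _ => ?_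
    rw [← mul_sum, Polynomial.eval_mul, Polynomial.eval_C, descPochhammer_eval_eq_descFactorial,
      ← sum_filter, sum_const, nsmul_eq_mul, mul_one]
    have h2 := count_supersets (idx S) k
    have h3 : (0 : ℝ) < (b.descFactorial #(idx S) : ℝ) := by
      exact_mod_cast Nat.descFactorial_pos.mpr (hidxb S)
    have h4 : ((#{Y ∈ powersetCard k (univ : Finset κ) | idx S ⊆ Y} : ℕ) : ℝ) * (b.descFactorial #(idx S) : ℝ)
      = (k.descFactorial #(idx S) : ℝ) * (b.choose k : ℝ) := by exact_mod_cast h2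
    field_simp
    linear_combination (-c S) * h4
  refine no_jump d q hqdeg ?_ ?_ ?_
  · have := hqev 0
    simpa [h0] using this
  · have := hqev 1
    rw [powersetCard_one, sum_map] at this
    simp [h1] at this
    rw [← hb] at this
    have hbr : (b : ℝ) ≠ 0 := by positivity
    exact mul_right_cancel₀ hbr (this.trans (one_mul _).symm)
  · intro k hk
    have h2 : (0 : ℝ) < (b.choose k : ℝ) := by exact_mod_cast Nat.choose_pos (hk.trans hlt)
    have h3 : |q.eval (k : ℝ)| * (b.choose k : ℝ) ≤ 1 * (b.choose k : ℝ) := by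
      calc |q.eval (k : ℝ)| * (b.choose k : ℝ) = |q.eval (k : ℝ) * (b.choose k : ℝ)| := by
            rw [abs_mul, abs_of_pos h2]
        _ ≤ ∑ Y ∈ powersetCard k (univ : Finset κ), |G (Y.biUnion B)| := by
            rw [hqev]; exact abs_sum_le_sum_abs _ _
        _ = ∑ Y ∈ powersetCard k (univ : Finset κ), 1 := by
            refine sum_congr rfl fun Y _ => ?_
            rcases hG (Y.biUnion B) with h | h <;> rw [h] <;> simp
        _ = _ := by simp [hb]
    exact le_of_mul_le_mul_right h3 h2


/-- Flip the coordinates of `x` lying in `T`. -/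
noncomputable def sh {n : ℕ} (x : Fin n → Bool) (T : Finset (Fin n)) : Fin n → Bool :=
  fun i => if i ∈ T then !(x i) else x i

lemma sh_flip {n : ℕ} (x : Fin n → Bool) (T : Finset (Fin n)) (i : Fin n) :
    sh x (symmDiff T {i}) = Function.update (sh x T) i (!(sh x T i)) := by
  ext j
  by_cases h : j = i
  · subst h
    by_cases hT : j ∈ T <;> simp [sh, mem_symmDiff, hT]
  · simp [sh, mem_symmDiff, h]

lemma cert {n : ℕ} (f : (Fin n → Bool) → Bool) (s : ℕ) (hs2 : 1 ≤ s)
    (hs : ∀ a, #{i : Fin n | f (Function.update a i (!(a i))) ≠ f a} ≤ s) (x : Fin n → Bool) :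
    ∃ U : Finset (Fin n), #U ≤ 4 * s ^ 5 ∧ ∀ y, (∀ i ∈ U, y i = x i) → f y = f x := by
  let G : Finset (Fin n) → ℝ := fun T => if f (sh x T) = f x then -1 else 1
  have hG : ∀ T, G T = 1 ∨ G T = -1 := by
    intro T; by_cases h : f (sh x T) = f x <;> simp [G, h]
  have hG0 : G ∅ = -1 := by
    have : sh x ∅ = x := by ext i; simp [sh]
    simp [G, this]
  have hGs : ∀ T, #{i | G (symmDiff T {i}) ≠ G T} ≤ s := by
    intro T
    refine le_trans (card_le_card ?_) (hs (sh x T))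
    intro i hi
    simp only [mem_filter, mem_univ, true_and] at hi ⊢
    intro h
    apply hi
    simp only [G, sh_flip, h]
  let Mn : Finset (Fin n) → Prop := fun B => G B = 1 ∧ ∀ B', B' ⊂ B → G B' = -1
  have hMs : ∀ B, Mn B → #B ≤ s := by
    intro B hB
    refine le_trans (card_le_card ?_) (hGs B)
    intro i hi
    simp only [mem_filter, mem_univ, true_and]
    have : symmDiff B {i} = B.erase i := by
      ext a; simp only [mem_symmDiff, mem_singleton, mem_erase]; grind
    rw [this, hB.2 _ (erase_ssubset hi), hB.1]; norm_num
  let Fam : Finset (Finset (Finset (Fin n))) := univ.filter fun F =>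
    (∀ B ∈ F, Mn B) ∧ ∀ B ∈ F, ∀ B' ∈ F, B ≠ B' → Disjoint B B'
  obtain ⟨F, hF, hmax⟩ := exists_max_image Fam card ⟨∅, by simp [Fam]⟩
  simp only [Fam, mem_filter, mem_univ, true_and] at hF hmax
  have hcard : #F < 4 * (s ^ 2) ^ 2 := by
    have := blocks_bound (κ := {B // B ∈ F}) G hG
      (fun S => (-1) ^ #S * ∑ T ∈ S.powerset, (-1) ^ #T * G T) (s ^ 2)
      (fun S hS => by rw [alt_sum_powerset G hG s hGs S hS, mul_zero])
      (fun U => moebius G U) (fun B => B.1)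
      (fun i j hij => hF.2 _ i.2 _ j.2 (fun h => hij (Subtype.ext h))) hG0
      (fun i => (hF.1 _ i.2).1) (Nat.one_le_pow _ _ hs2)
    simpa using this
  refine ⟨F.biUnion id, ?_, ?_⟩
  · calc #(F.biUnion id) ≤ #F * s := card_biUnion_le_card_mul _ _ _ fun B hB => hMs B (hF.1 B hB)
      _ ≤ (4 * (s ^ 2) ^ 2) * s := Nat.mul_le_mul_right _ hcard.le
      _ = _ := by ring
  · intro y hy
    by_contra hne
    let D : Finset (Fin n) := univ.filter fun i => y i ≠ x i
    have hD : sh x D = y := by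
      ext i
      by_cases h : y i = x i
      · simp [sh, D, h]
      · simp [sh, D, h]
        cases hx : x i <;> cases hy' : y i <;> simp_all
    have hGD : G D = 1 := by simp [G, hD, hne]
    obtain ⟨B, hB, hmin⟩ := exists_min_image (D.powerset.filter fun B => G B = 1) card
      ⟨D, by simp [hGD]⟩
    simp only [mem_filter, mem_powerset] at hB hmin
    have hMB : Mn B := by
      refine ⟨hB.2, fun B' hB' => ?_⟩
      rcases hG B' with h | h
      · have := hmin B' ⟨hB'.subset.trans hB.1, h⟩
        have := card_lt_card hB'
        omega
      · exact h
    have hdis : ∀ B' ∈ F, Disjoint B B' := by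
      intro B' hB'
      rw [disjoint_left]
      intro i hi hi'
      have h1 := hB.1 hi
      simp only [D, mem_filter, mem_univ, true_and] at h1
      exact h1 (hy i (mem_biUnion.mpr ⟨B', hB', hi'⟩))
    have hBF : B ∉ F := by
      intro h
      have := hdis B h
      rw [disjoint_self] at this
      have h2 : G B = -1 := by rw [this]; exact hG0
      rw [hB.2] at h2; norm_num at h2
    have := hmax (insert B F) ⟨?_, ?_⟩
    · rw [card_insert_of_notMem hBF] at this; omega
    · intro B' hB'
      rcases mem_insert.mp hB' with rfl | h
      · exact hMB
      · exact hF.1 B' h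
    · intro B1 h1 B2 h2 h12
      rcases mem_insert.mp h1 with e1 | e1 <;> rcases mem_insert.mp h2 with e2 | e2
      · exact absurd (e1.trans e2.symm) h12
      · exact e1 ▸ hdis _ e2
      · exact e2 ▸ (hdis _ e1).symm
      · exact hF.2 _ e1 _ e2 h12

lemma eq_not_of_ne' {a b : Bool} (h : ¬ a = b) : a = !b := by
  revert a b; decide

/-- Each variable can be isolated by a small partial assignment. -/
lemma isolate {n : ℕ} (f : (Fin n → Bool) → Bool) (s : ℕ) (hs2 : 1 ≤ s)
    (hs : ∀ a, #{i : Fin n | f (Function.update a i (!(a i))) ≠ f a} ≤ s)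
    (i : Fin n) (hi : ∃ a, f (Function.update a i (!(a i))) ≠ f a) :
    ∃ (P : Finset (Fin n)) (p : Fin n → Bool), #P ≤ 8 * s ^ 5 ∧ i ∉ P ∧
      ((∀ y, (∀ l ∈ P, y l = p l) → f y = y i) ∨ (∀ y, (∀ l ∈ P, y l = p l) → f y = !(y i))) := by
  obtain ⟨a, ha⟩ := hi
  set a' := Function.update a i (!(a i)) with ha'
  obtain ⟨U, hU, hUf⟩ := cert f s hs2 hs a
  obtain ⟨V, hV, hVf⟩ := cert f s hs2 hs a'
  refine ⟨(U ∪ V).erase i, a, ?_, by simp, ?_⟩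
  · have h1 := card_union_le U V
    have h2 := card_erase_le (s := U ∪ V) (a := i)
    omega
  · have k1 : ∀ y, (∀ l ∈ (U ∪ V).erase i, y l = a l) → y i = a i → f y = f a := by
      intro y hy hyi
      apply hUf
      intro l hl
      by_cases h : l = i
      · rw [h, hyi]
      · exact hy l (by simp [h, hl])
    have k2 : ∀ y, (∀ l ∈ (U ∪ V).erase i, y l = a l) → y i = !(a i) → f y = f a' := by
      intro y hy hyi
      apply hVf
      intro l hl
      by_cases h : l = i
      · rw [h, hyi, ha']; simp
      · rw [ha', Function.update_of_ne h]; exact hy l (by simp [h, hl])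
    by_cases hfa : f a = a i
    · left
      intro y hy
      by_cases h : y i = a i
      · rw [k1 y hy h, h, hfa]
      · have h' := eq_not_of_ne' h
        rw [k2 y hy h', h', eq_not_of_ne' ha, hfa]
    · right
      intro y hy
      by_cases h : y i = a i
      · rw [k1 y hy h, h]
        exact eq_not_of_ne' hfa
      · have h' := eq_not_of_ne' h
        rw [k2 y hy h', h', eq_not_of_ne' ha, eq_not_of_ne' hfa]


lemma count_coll (n M : ℕ) (u v : Fin n) (huv : u ≠ v) :
    #{c : Fin n → Fin M | c u = c v} * M ≤ M ^ n := by
  have h : #(({c : Fin n → Fin M | c u = c v} : Finset _) ×ˢ (univ : Finset (Fin M)))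
      ≤ #(univ : Finset (Fin n → Fin M)) := by
    refine card_le_card_of_injOn (fun p => Function.update p.1 u p.2) (fun _ _ => mem_coe.mpr (mem_univ _)) ?_
    rintro ⟨c, m⟩ h1 ⟨c', m'⟩ h2 h
    simp only [coe_product, Set.mem_prod, mem_coe, mem_filter, mem_univ, true_and, and_true] at h1 h2 h
    have hm : m = m' := by simpa using congrFun h u
    have hw : ∀ w, w ≠ u → c w = c' w := fun w hw => by
      simpa [Function.update_of_ne hw] using congrFun h w
    have hc : c = c' := by
      ext w
      by_cases hwu : w = u
      · rw [hwu, h1, h2, hw v huv.symm]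
      · rw [hw w hwu]
    rw [hm, hc]
  simpa [card_product] using h

/-- A good colouring. -/
lemma coloring (n L M : ℕ) (hM : 2 * L ^ 2 ≤ M) (hL : 1 ≤ L) (S : Fin n → Finset (Fin n)) (hS : ∀ i, #(S i) ≤ L) :
    ∃ c : Fin n → Fin M, n ≤ 2 * #{i | Set.InjOn c (S i : Set (Fin n))} := by
  have hMpos : 0 < M := by nlinarith
  by_contra hcon
  push Not at hcon
  -- bad pairs
  have hbad : ∀ i, 2 * #{c : Fin n → Fin M | ¬ Set.InjOn c (S i : Set (Fin n))} ≤ M ^ n := by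
    intro i
    have h1 : ({c : Fin n → Fin M | ¬ Set.InjOn c (S i : Set (Fin n))} : Finset _)
        ⊆ (S i).offDiag.biUnion fun p => {c : Fin n → Fin M | c p.1 = c p.2} := by
      intro c hc
      have hc := (mem_filter.mp hc).2
      unfold Set.InjOn at hc
      push Not at hc
      obtain ⟨u, hu, v, hv, huv, hne⟩ := hc
      refine mem_biUnion.mpr ⟨(u, v), ?_, by simpa using huv⟩
      exact mem_offDiag.mpr ⟨hu, hv, hne⟩
    have h2 : #{c : Fin n → Fin M | ¬ Set.InjOn c (S i : Set (Fin n))} * M ≤ L ^ 2 * M ^ n := by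
      calc _ ≤ (∑ p ∈ (S i).offDiag, #{c : Fin n → Fin M | c p.1 = c p.2}) * M :=
            Nat.mul_le_mul_right _ ((card_le_card h1).trans card_biUnion_le)
        _ = ∑ p ∈ (S i).offDiag, #{c : Fin n → Fin M | c p.1 = c p.2} * M := sum_mul _ _ _
        _ ≤ ∑ p ∈ (S i).offDiag, M ^ n := sum_le_sum fun p hp =>
            count_coll n M p.1 p.2 (mem_offDiag.mp hp).2.2
        _ = #(S i).offDiag * M ^ n := by simp
        _ ≤ L ^ 2 * M ^ n := by
            apply Nat.mul_le_mul_right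
            rw [offDiag_card]
            have := Nat.mul_le_mul (hS i) (hS i)
            rw [sq]; omega
    have h3 : (2 * #{c : Fin n → Fin M | ¬ Set.InjOn c (S i : Set (Fin n))}) * M ≤ M ^ n * M := by
      calc _ ≤ 2 * (L ^ 2 * M ^ n) := by rw [mul_assoc]; exact Nat.mul_le_mul_left _ h2
        _ = M ^ n * (2 * L ^ 2) := by ring
        _ ≤ _ := Nat.mul_le_mul_left _ hM
    exact Nat.le_of_mul_le_mul_right h3 hMpos
  have hsum : ∑ i : Fin n, #{c : Fin n → Fin M | ¬ Set.InjOn c (S i : Set (Fin n))}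
      = ∑ c : Fin n → Fin M, #{i | ¬ Set.InjOn c (S i : Set (Fin n))} := by
    simp only [card_filter]
    exact sum_comm
  have hl : 2 * ∑ i : Fin n, #{c : Fin n → Fin M | ¬ Set.InjOn c (S i : Set (Fin n))} ≤ n * M ^ n := by
    rw [mul_sum]
    calc _ ≤ ∑ i : Fin n, M ^ n := sum_le_sum fun i _ => hbad i
      _ = _ := by simp
  have hr : n * M ^ n < 2 * ∑ c : Fin n → Fin M, #{i | ¬ Set.InjOn c (S i : Set (Fin n))} := by
    rw [mul_sum]
    calc n * M ^ n = ∑ c : Fin n → Fin M, n := by simp [mul_comm]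
      _ < _ := by
        refine sum_lt_sum_of_nonempty ⟨fun _ => ⟨0, hMpos⟩, mem_univ _⟩ fun c _ => ?_
        have h1 := hcon c
        have h2 := card_filter_add_card_filter_not (s := (univ : Finset (Fin n)))
          (fun i => Set.InjOn c (S i : Set (Fin n)))
        rw [card_univ, Fintype.card_fin] at h2
        omega
  rw [hsum] at hl
  omega


lemma main_aux (n s : ℕ) (hs1 : 1 ≤ s) (hn : 0 < n) (f : (Fin n → Bool) → Bool)
    (hs : ∀ a, #{i : Fin n | f (Function.update a i (!(a i))) ≠ f a} ≤ s)
    (hf : ∀ i, ∃ a, f (Function.update a i (!(a i))) ≠ f a) :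
    ∃ r t : ℕ, 0 < r ∧ 0 < t ∧ r ≤ 324 * s ^ 10 ∧ n ≤ t * (324 * s ^ 10) ∧
      ∃ ν : Fin n → Fin (r + t),
        ∀ j : Fin t, ∃ a : Fin r → Bool,
          (∀ b : Fin t → Bool, f (fun i => Fin.append a b (ν i)) = b j) ∨
          (∀ b : Fin t → Bool, f (fun i => Fin.append a b (ν i)) = !(b j)) := by
  choose P p hP hiP hPf using fun i => isolate f s hs1 hs i (hf i)
  have hs5 : 1 ≤ s ^ 5 := Nat.one_le_pow _ _ hs1
  let M := 162 * s ^ 10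
  have hM : 2 * (9 * s ^ 5) ^ 2 ≤ M := le_of_eq (by simp only [M]; ring)
  have hMpos : 0 < M := by positivity
  obtain ⟨c, hc⟩ := coloring n (9 * s ^ 5) M hM (by omega) (fun i => insert i (P i)) (fun i => by
    have h1 := card_insert_le i (P i)
    have h2 := hP i
    omega)
  set good : Finset (Fin n) := {i | Set.InjOn c (insert i (P i) : Finset (Fin n))} with hgood
  -- the most popular colour
  obtain ⟨m, hm⟩ : ∃ m : Fin M, #good ≤ #(good.filter fun i => c i = m) * M := by
    by_contra hcon
    push Not at hcon
    have h1 : #good = ∑ m : Fin M, #(good.filter fun i => c i = m) :=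
      card_eq_sum_card_fiberwise fun i _ => mem_coe.mpr (mem_univ _)
    have h2 : ∑ m : Fin M, #(good.filter fun i => c i = m) * M < ∑ m : Fin M, #good :=
      sum_lt_sum_of_nonempty ⟨⟨0, hMpos⟩, mem_univ _⟩ fun m _ => hcon m
    rw [← sum_mul, ← h1] at h2
    simp [mul_comm] at h2
  set T := good.filter fun i => c i = m with hT
  have hnt : n ≤ #T * (324 * s ^ 10) := by
    have : #T * (324 * s ^ 10) = 2 * (#T * M) := by simp only [M]; ring
    omega
  let e : {x // x ∈ T} ≃ Fin #T := T.equivFin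
  refine ⟨M, #T, hMpos, ?_, ?_, hnt, ?_⟩
  · rcases Nat.eq_zero_or_pos #T with h | h
    · rw [h] at hnt; omega
    · exact h
  · simp only [M]; exact Nat.mul_le_mul_right _ (by norm_num)
  refine ⟨fun i => if h : i ∈ T then Fin.natAdd M (e ⟨i, h⟩) else Fin.castAdd #T (c i), ?_⟩
  intro j
  set i0 := e.symm j with hi0
  have hi0T : (i0 : Fin n) ∈ T := i0.2
  have hinj : Set.InjOn c (insert (i0 : Fin n) (P i0) : Finset (Fin n)) := by
    have := (mem_filter.mp hi0T).1
    simpa [hgood] using this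
  have hcm : ∀ i ∈ T, c i = m := fun i hi => (mem_filter.mp hi).2
  let a : Fin M → Bool := fun col => decide (∃ l ∈ P i0, c l = col ∧ p i0 l = true)
  refine ⟨a, ?_⟩
  have hagree : ∀ b : Fin #T → Bool, ∀ l ∈ P i0,
      Fin.append a b (if h : l ∈ T then Fin.natAdd M (e ⟨l, h⟩) else Fin.castAdd #T (c l)) = p i0 l := by
    intro b l hl
    have hlT : l ∉ T := by
      intro h
      have h1 : c l = c i0 := (hcm l h).trans (hcm _ hi0T).symm
      have h2 : l = i0 := hinj (by simp [hl]) (by simp) h1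
      exact hiP i0 (h2 ▸ hl)
    rw [dif_neg hlT, Fin.append_left]
    simp only [a]
    cases hp : p i0 l
    · simp only [decide_eq_false_iff_not]
      rintro ⟨l', hl', h1, h2⟩
      have h3 : l' = l := hinj (by simp [hl']) (by simp [hl]) h1
      rw [h3, hp] at h2; cases h2
    · simp only [decide_eq_true_eq]
      exact ⟨l, hl, rfl, hp⟩
  have hval : ∀ b : Fin #T → Bool,
      Fin.append a b (if h : (i0 : Fin n) ∈ T then Fin.natAdd M (e ⟨i0, h⟩) else Fin.castAdd #T (c i0)) = b j := by
    intro b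
    rw [dif_pos hi0T, Fin.append_right]
    simp [hi0]
  rcases hPf i0 with h | h
  · left
    intro b
    rw [h _ (hagree b)]
    exact hval b
  · right
    intro b
    rw [h _ (hagree b)]
    exact congrArg (fun z => !z) (hval b)

end PA

theorem pseudoaddressing_projection :
    ∃ C : ℝ, 1 ≤ C ∧ ∃ k : ℕ, 1 ≤ k ∧
      ∀ (n : ℕ) (f : (Fin n → Bool) → Bool), TrulyVariate f → 2 ≤ sensitivity f →
        ∃ r t : ℕ, 0 < r ∧ 0 < t ∧
          (r : ℝ) ≤ C * (sensitivity f : ℝ) ^ k ∧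
          (n : ℝ) / (C * (sensitivity f : ℝ) ^ k) ≤ (t : ℝ) ∧
          ∃ ν : Fin n → Fin (r + t),
            ∀ j : Fin t, ∃ a : Fin r → Bool,
              (∀ b : Fin t → Bool, f (fun i => Fin.append a b (ν i)) = b j) ∨
              (∀ b : Fin t → Bool, f (fun i => Fin.append a b (ν i)) = !(b j)) := by
  refine ⟨324, by norm_num, 10, by norm_num, ?_⟩
  intro n f hf hs2
  have hs : ∀ a, (Finset.univ.filter (fun i : Fin n => f (Function.update a i (!(a i))) ≠ f a)).card
      ≤ sensitivity f := fun a => Finset.le_sup (f := fun a : Fin n → Bool =>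
    (Finset.univ.filter (fun i : Fin n => f (Function.update a i (!(a i))) ≠ f a)).card)
      (Finset.mem_univ a)
  have hn : 0 < n := by
    rcases Nat.eq_zero_or_pos n with h | h
    · subst h
      simp [sensitivity] at hs2
    · exact h
  have hf' : ∀ i : Fin n, ∃ a, f (Function.update a i (!(a i))) ≠ f a := by
    intro i
    obtain ⟨a, ha⟩ := hf i
    refine ⟨a, ?_⟩
    convert ha
  obtain ⟨r, t, hr, ht, hrs, hts, hν⟩ := PA.main_aux n (sensitivity f) (by omega) hn f hs hf'
  refine ⟨r, t, hr, ht, by exact_mod_cast hrs, ?_, hν⟩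
  have hpos : (0 : ℝ) < 324 * (sensitivity f : ℝ) ^ 10 := by
    have : (0 : ℝ) < (sensitivity f : ℝ) := by exact_mod_cast (by omega : 0 < sensitivity f)
    positivity
  rw [div_le_iff₀ hpos]
  exact_mod_cast hts
end
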